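/- There exists an absolute constant c ≥ 1 such that for every dimension d ≥ 2, all convex bodies G, K ⊆ ℝ^d with G ⊆ int(K), and every α with 0 < α ≤ 1, with G₊ := {x ∈ int(K) : inf_{g∈G} d_H^K(x,g) ≤ α} the Hilbert α-expansion of G in K, one has c^{−d} · vol_H^K(G) / (ω_d · α^d) ≤ N_K(G, α) ≤ c^{d} · vol_H^K(G₊) / (ω_d · α^d), where N_K(·,·) is the Hilbert covering number and vol_H^K is the Hilbert Holmes–Thompson volume. -/

import Mathlib

open Set MeasureTheory Metric
open scoped Pointwise RealInnerProductSpace ENNReal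

noncomputable section

abbrev Euc (d : ℕ) := EuclideanSpace ℝ (Fin d)

/-- A convex body: a compact convex set with nonempty interior. -/
def IsConvexBody {d : ℕ} (K : Set (Euc d)) : Prop :=
  IsCompact K ∧ Convex ℝ K ∧ (interior K).Nonempty

/-- The polar of a set. -/
def polarSet {d : ℕ} (S : Set (Euc d)) : Set (Euc d) :=
  {y | ∀ x ∈ S, ⟪x, y⟫ ≤ 1}

/-- The Hilbert distance with respect to the body `K`. -/
def hilbertDist {d : ℕ} (K : Set (Euc d)) (x y : Euc d) : ℝ :=
  -(1 / 2) * Real.log ((1 - gauge ((fun k => k - x) '' K) (y - x)) *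
    (1 - gauge ((fun k => k - y) '' K) (x - y)))

/-- The Hilbert ball of radius `r` centered at `x`. -/
def hilbertBall {d : ℕ} (K : Set (Euc d)) (x : Euc d) (r : ℝ) : Set (Euc d) :=
  {y ∈ interior K | hilbertDist K x y ≤ r}

/-- The Hilbert covering number of `U` at scale `α` in the geometry induced by `K`. -/
def hilbertCov {d : ℕ} (K U : Set (Euc d)) (α : ℝ) : ℕ :=
  sInf {m : ℕ | ∃ x : Fin m → Euc d, (∀ i, x i ∈ interior K) ∧
    U ⊆ ⋃ i, hilbertBall K (x i) α}

/-- The translative covering number of `U` by translates of `α • D`. -/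
def transCov {d : ℕ} (D U : Set (Euc d)) (α : ℝ) : ℕ :=
  sInf {m : ℕ | ∃ x : Fin m → Euc d, U ⊆ ⋃ i, x i +ᵥ α • D}

/-- The Hilbert `α`-expansion of `G` in `K`. -/
def hilbertExpand {d : ℕ} (K G : Set (Euc d)) (α : ℝ) : Set (Euc d) :=
  {x ∈ interior K | sInf (hilbertDist K x '' G) ≤ α}

/-- The Lebesgue volume of the Euclidean unit ball in `ℝ^d`. -/
def ωd (d : ℕ) : ℝ := (volume (ball (0 : Euc d) 1)).toReal

/-- The Hilbert Finsler unit ball at `y` in the geometry induced by `K`. -/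
def finslerBall {d : ℕ} (K : Set (Euc d)) (y : Euc d) : Set (Euc d) :=
  {v | gauge ((fun k => k - y) '' K) v + gauge ((fun k => k - y) '' K) (-v) ≤ 2}

/-- The Hilbert Holmes–Thompson volume of `U` in the geometry induced by `K`. -/
def volH {d : ℕ} (K U : Set (Euc d)) : ℝ :=
  (1 / ωd d) * ∫ y in U, (volume (polarSet (finslerBall K y))).toReal

/-- The recentered Macbeath region `A(x) := (K ∩ (2x − K)) − x`. -/
def macbeathA {d : ℕ} (K : Set (Euc d)) (x : Euc d) : Set (Euc d) :=
  (fun k => k - x) '' (K ∩ ((fun k => (2 : ℝ) • x - k) '' K))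

/-- Laplace transform of a set. -/
def lapZ {d : ℕ} (L : Set (Euc d)) (x : Euc d) : ℝ := ∫ y in L, Real.exp ⟪x, y⟫

def lapV {d : ℕ} (L : Set (Euc d)) (x : Euc d) : Euc d := ∫ y in L, Real.exp ⟪x, y⟫ • y

def lapM {d : ℕ} (L : Set (Euc d)) (x : Euc d) : Euc d := (lapZ L x)⁻¹ • lapV L x

def lapQ {d : ℕ} (L : Set (Euc d)) (x : Euc d) : Euc d →L[ℝ] Euc d :=
  ∫ y in L, Real.exp ⟪x, y⟫ • (innerSL ℝ y).smulRight y

def lapD {d : ℕ} (L : Set (Euc d)) (x : Euc d) : Euc d →L[ℝ] Euc d :=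
  (lapZ L x)⁻¹ • lapQ L x - (innerSL ℝ (lapM L x)).smulRight (lapM L x)

theorem lap_integrable {d : ℕ} {L : Set (Euc d)} (hL : IsCompact L) {F : Type*}
    [NormedAddCommGroup F] {f : Euc d → F} (hf : Continuous f) :
    IntegrableOn f L := hf.continuousOn.integrableOn_compact hL

theorem lap_hasFDerivAt {d : ℕ} {L : Set (Euc d)} (hL : IsCompact L) {F : Type*}
    [NormedAddCommGroup F] [NormedSpace ℝ F] [CompleteSpace F] {f : Euc d → F} (hf : Continuous f)
    (x : Euc d) :
    HasFDerivAt (fun x => ∫ y in L, Real.exp ⟪x, y⟫ • f y)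
      (∫ y in L, Real.exp ⟪x, y⟫ • (innerSL ℝ y).smulRight (f y)) x := by
  obtain ⟨R, hR⟩ := hL.isBounded.exists_norm_le
  have hc : ∀ x : Euc d, Continuous fun y : Euc d => Real.exp ⟪x, y⟫ • f y := by
    intro x; fun_prop
  have hc' : ∀ x : Euc d, Continuous fun y : Euc d =>
      Real.exp ⟪x, y⟫ • (innerSL ℝ y).smulRight (f y) := by
    intro x
    have : Continuous fun y : Euc d => (innerSL ℝ y).smulRight (f y) := by
      have h1 : Continuous fun y : Euc d => ContinuousLinearMap.smulRightL ℝ (Euc d) F (innerSL ℝ y) (f y) := by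
        fun_prop
      exact h1
    fun_prop
  refine hasFDerivAt_integral_of_dominated_of_fderiv_le (s := ball x 1)
    (F' := fun x y => Real.exp ⟪x, y⟫ • (innerSL ℝ y).smulRight (f y))
    (bound := fun y => Real.exp ((‖x‖ + 1) * ‖y‖) * (‖y‖ * ‖f y‖)) (ball_mem_nhds x one_pos)
    (Filter.Eventually.of_forall fun x => (hc x).aestronglyMeasurable)
    (lap_integrable hL (hc x)) (hc' x).aestronglyMeasurable ?_ ?_ ?_
  · refine Filter.Eventually.of_forall fun y z hz => ?_
    rw [norm_smul, ContinuousLinearMap.norm_smulRight_apply, innerSL_apply_norm]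
    gcongr
    rw [Real.norm_eq_abs, Real.abs_exp]
    apply Real.exp_le_exp.2
    refine (real_inner_le_norm _ _).trans ?_
    gcongr
    have := mem_ball_iff_norm.1 hz
    calc ‖z‖ = ‖x + (z - x)‖ := by congr 1; abel
      _ ≤ ‖x‖ + ‖z - x‖ := norm_add_le _ _
      _ ≤ _ := by linarith
  · exact lap_integrable hL (by fun_prop)
  · refine Filter.Eventually.of_forall fun y z hz => ?_
    have h1 : HasFDerivAt (fun z : Euc d => ⟪z, y⟫) (innerSL ℝ y) z := by
      have := (innerSL ℝ y).hasFDerivAt (x := z)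
      refine this.congr_of_eventuallyEq (Filter.Eventually.of_forall fun w => ?_)
      simp [real_inner_comm]
    have h2 := h1.exp.smul_const (f y)
    refine h2.congr_fderiv ?_
    ext w
    simp [smul_smul]

theorem lapZ_pos {d : ℕ} {L : Set (Euc d)} (hL : IsCompact L) (hv : 0 < volume L) (x : Euc d) :
    0 < lapZ L x := by
  have : Nontrivial (Euc d) ∨ True := Or.inr trivial
  unfold lapZ
  rw [setIntegral_pos_iff_support_of_nonneg_ae]
  · have : (Function.support fun y : Euc d => Real.exp ⟪x, y⟫) = univ := by
      ext y; simp [Real.exp_ne_zero]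
    rw [this, univ_inter]; exact hv
  · exact Filter.Eventually.of_forall fun y => (Real.exp_pos _).le
  · exact lap_integrable hL (by fun_prop)

theorem lapQ_integrable {d : ℕ} {L : Set (Euc d)} (hL : IsCompact L) (x : Euc d) :
    IntegrableOn (fun y : Euc d => Real.exp ⟪x, y⟫ • (innerSL ℝ y).smulRight y) L := by
  apply lap_integrable hL
  have h1 : Continuous fun y : Euc d => ContinuousLinearMap.smulRightL ℝ (Euc d) (Euc d) (innerSL ℝ y) y := by
    fun_prop
  have h2 : Continuous fun y : Euc d => (innerSL ℝ y).smulRight y := h1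
  fun_prop

theorem lapQ_apply {d : ℕ} {L : Set (Euc d)} (hL : IsCompact L) (x w : Euc d) :
    lapQ L x w = ∫ y in L, (Real.exp ⟪x, y⟫ * ⟪y, w⟫) • y := by
  unfold lapQ
  rw [ContinuousLinearMap.integral_apply (lapQ_integrable hL x)]
  simp [smul_smul]

theorem lapV_inner {d : ℕ} {L : Set (Euc d)} (hL : IsCompact L) (x w : Euc d) :
    ⟪w, lapV L x⟫ = ∫ y in L, Real.exp ⟪x, y⟫ * ⟪w, y⟫ := by
  unfold lapV
  rw [← integral_inner (lap_integrable hL (by fun_prop))]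
  simp [inner_smul_right]

theorem lapQ_inner {d : ℕ} {L : Set (Euc d)} (hL : IsCompact L) (x w w' : Euc d) :
    ⟪w', lapQ L x w⟫ = ∫ y in L, Real.exp ⟪x, y⟫ * (⟪w, y⟫ * ⟪w', y⟫) := by
  rw [lapQ_apply hL, ← integral_inner (lap_integrable hL (by fun_prop))]
  congr 1; ext y
  rw [inner_smul_right, real_inner_comm w y]; ring

theorem lapZ_hasFDerivAt {d : ℕ} {L : Set (Euc d)} (hL : IsCompact L) (x : Euc d) :
    HasFDerivAt (lapZ L) (innerSL ℝ (lapV L x)) x := by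
  have h := lap_hasFDerivAt hL (f := fun _ => (1:ℝ)) continuous_const x
  simp only [smul_eq_mul, mul_one] at h
  refine h.congr_fderiv ?_
  ext w
  rw [ContinuousLinearMap.integral_apply]
  · rw [innerSL_apply_apply, real_inner_comm, lapV_inner hL]
    simp [real_inner_comm]
  · apply lap_integrable hL
    have h1 : Continuous fun y : Euc d => ContinuousLinearMap.smulRightL ℝ (Euc d) ℝ (innerSL ℝ y) 1 := by
      fun_prop
    have h2 : Continuous fun y : Euc d => (innerSL ℝ y).smulRight (1:ℝ) := h1
    fun_prop

theorem lapD_apply {d : ℕ} (L : Set (Euc d)) (x w : Euc d) :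
    lapD L x w = (lapZ L x)⁻¹ • lapQ L x w - ⟪lapM L x, w⟫ • lapM L x := rfl

theorem lapM_hasFDerivAt {d : ℕ} {L : Set (Euc d)} (hL : IsCompact L) (hv : 0 < volume L)
    (x : Euc d) : HasFDerivAt (lapM L) (lapD L x) x := by
  have hZ := lapZ_pos hL hv x
  have h1 := lapZ_hasFDerivAt hL x
  have h2 : HasFDerivAt (lapV L) (lapQ L x) x := lap_hasFDerivAt hL continuous_id x
  have h3 := (HasDerivAt.comp_hasFDerivAt x (hasDerivAt_inv hZ.ne') h1).smul h2
  refine h3.congr_fderiv ?_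
  ext w : 1
  rw [lapD_apply]
  change (lapZ L x)⁻¹ • lapQ L x w + (-(lapZ L x ^ 2)⁻¹ • ⟪lapV L x, w⟫) • lapV L x = _
  rw [sub_eq_add_neg, ← neg_smul]
  congr 1
  simp only [lapM, inner_smul_left, smul_smul, conj_trivial, smul_eq_mul]
  congr 1
  field_simp

theorem lapD_inner {d : ℕ} {L : Set (Euc d)} (hL : IsCompact L) (hv : 0 < volume L)
    (x w w' : Euc d) : ⟪w', lapD L x w⟫ =
      (lapZ L x)⁻¹ * ∫ y in L, Real.exp ⟪x, y⟫ * (⟪w, y - lapM L x⟫ * ⟪w', y - lapM L x⟫) := by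
  have hZ := lapZ_pos hL hv x
  have hV : ∀ w : Euc d, ⟪w, lapM L x⟫ = (lapZ L x)⁻¹ * ∫ y in L, Real.exp ⟪x, y⟫ * ⟪w, y⟫ := by
    intro w; rw [← lapV_inner hL, lapM, inner_smul_right]
  have hV' : ∀ w : Euc d, ∫ y in L, Real.exp ⟪x, y⟫ * ⟪w, y⟫ = lapZ L x * ⟪w, lapM L x⟫ := by
    intro w; rw [hV]; field_simp
  have e : (fun y : Euc d => Real.exp ⟪x, y⟫ * (⟪w, y - lapM L x⟫ * ⟪w', y - lapM L x⟫)) =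
      fun y => Real.exp ⟪x, y⟫ * (⟪w, y⟫ * ⟪w', y⟫) - ⟪w, lapM L x⟫ * (Real.exp ⟪x, y⟫ * ⟪w', y⟫)
        - ⟪w', lapM L x⟫ * (Real.exp ⟪x, y⟫ * ⟪w, y⟫)
        + (⟪w, lapM L x⟫ * ⟪w', lapM L x⟫) * Real.exp ⟪x, y⟫ := by
    ext y; simp only [inner_sub_right]; ring
  rw [e]
  have i1 : IntegrableOn (fun y : Euc d => Real.exp ⟪x, y⟫ * (⟪w, y⟫ * ⟪w', y⟫)) L :=
    lap_integrable hL (by fun_prop)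
  have i2 : ∀ (c : ℝ) (w : Euc d), IntegrableOn (fun y : Euc d => c * (Real.exp ⟪x, y⟫ * ⟪w, y⟫)) L :=
    fun c w => lap_integrable hL (by fun_prop)
  have i3 : ∀ (c : ℝ), IntegrableOn (fun y : Euc d => c * Real.exp ⟪x, y⟫) L :=
    fun c => lap_integrable hL (by fun_prop)
  rw [integral_add (lap_integrable hL (by fun_prop)) (i3 _),
    integral_sub (lap_integrable hL (by fun_prop)) (i2 _ _), integral_sub i1 (i2 _ _), integral_const_mul, integral_const_mul, integral_const_mul, hV', hV',
    ← lapQ_inner hL]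
  change _ = (lapZ L x)⁻¹ * (_ - _ - _ + _ * lapZ L x)
  rw [lapD_apply]
  simp only [inner_sub_right, inner_smul_right]
  rw [real_inner_comm w]
  field_simp
  ring

theorem lapM_norm_le {d : ℕ} {L : Set (Euc d)} (hL : IsCompact L) (hv : 0 < volume L) {R : ℝ}
    (hR : ∀ y ∈ L, ‖y‖ ≤ R) (x : Euc d) : ‖lapM L x‖ ≤ R := by
  have hZ := lapZ_pos hL hv x
  rw [lapM, norm_smul, Real.norm_eq_abs, abs_of_pos (inv_pos.2 hZ), inv_mul_le_iff₀ hZ]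
  unfold lapV lapZ
  refine (norm_integral_le_integral_norm _).trans ?_
  rw [← integral_mul_const]
  refine setIntegral_mono_on (lap_integrable hL (by fun_prop)) (lap_integrable hL (by fun_prop))
    hL.measurableSet fun y hy => ?_
  rw [norm_smul, Real.norm_eq_abs, Real.abs_exp]
  gcongr; exact hR y hy

theorem lapD_norm_le {d : ℕ} {L : Set (Euc d)} (hL : IsCompact L) (hv : 0 < volume L) {R : ℝ}
    (hR : ∀ y ∈ L, ‖y‖ ≤ R) (hR0 : 0 ≤ R) (x : Euc d) : ‖lapD L x‖ ≤ 2 * R ^ 2 := by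
  have hZ := lapZ_pos hL hv x
  have hm := lapM_norm_le hL hv hR x
  refine (norm_sub_le _ _).trans ?_
  rw [ContinuousLinearMap.norm_smulRight_apply, innerSL_apply_norm]
  have h1 : ‖(lapZ L x)⁻¹ • lapQ L x‖ ≤ R ^ 2 := by
    rw [norm_smul, Real.norm_eq_abs, abs_of_pos (inv_pos.2 hZ), inv_mul_le_iff₀ hZ]
    unfold lapQ lapZ
    refine (norm_integral_le_integral_norm _).trans ?_
    rw [← integral_mul_const]
    refine setIntegral_mono_on (lapQ_integrable hL x).norm (lap_integrable hL (by fun_prop))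
      hL.measurableSet fun y hy => ?_
    rw [norm_smul, Real.norm_eq_abs, Real.abs_exp, ContinuousLinearMap.norm_smulRight_apply,
      innerSL_apply_norm, sq]
    have := hR y hy
    gcongr
  nlinarith [norm_nonneg (lapM L x)]

theorem lapM_mem_closedConvex {d : ℕ} {L : Set (Euc d)} (hL : IsCompact L) (hc : Convex ℝ L)
    (hv : 0 < volume L) (x : Euc d) : lapM L x ∈ L := by
  by_contra h
  obtain ⟨f, u, h1, h2⟩ := geometric_hahn_banach_closed_point hc hL.isClosed h
  have hZ := lapZ_pos hL hv x
  have h3 : f (lapV L x) ≤ lapZ L x * u := by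
    unfold lapV lapZ
    rw [← ContinuousLinearMap.integral_comp_comm _ (lap_integrable hL (by fun_prop)),
      ← integral_mul_const]
    refine setIntegral_mono_on (lap_integrable hL (by fun_prop)) (lap_integrable hL (by fun_prop))
      hL.measurableSet fun y hy => ?_
    rw [map_smul, smul_eq_mul]
    gcongr; exact (h1 y hy).le
  rw [lapM, map_smul, smul_eq_mul, lt_inv_mul_iff₀ hZ] at h2
  linarith

/-- convexity of the log-Laplace transform -/
theorem lapZ_convex {d : ℕ} {L : Set (Euc d)} (hL : IsCompact L) (hv : 0 < volume L)
    (x z : Euc d) : Real.log (lapZ L x) + ⟪z - x, lapM L x⟫ ≤ Real.log (lapZ L z) := by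
  have hZ := lapZ_pos hL hv x
  have hZ' := lapZ_pos hL hv z
  rw [← Real.log_exp ⟪z - x, lapM L x⟫, ← Real.log_mul hZ.ne' (Real.exp_ne_zero _)]
  apply Real.log_le_log (by positivity)
  set m := lapM L x
  have hV : ∫ y in L, Real.exp ⟪x, y⟫ * ⟪z - x, y⟫ = lapZ L x * ⟪z - x, m⟫ := by
    rw [← lapV_inner hL]; simp only [m, lapM, inner_smul_right]; field_simp
  calc lapZ L x * Real.exp ⟪z - x, m⟫
      = ∫ y in L, (Real.exp ⟪z - x, m⟫ * (1 - ⟪z - x, m⟫) * Real.exp ⟪x, y⟫ +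
          Real.exp ⟪z - x, m⟫ * (Real.exp ⟪x, y⟫ * ⟪z - x, y⟫)) := by
        rw [integral_add (lap_integrable hL (by fun_prop)) (lap_integrable hL (by fun_prop)),
          integral_const_mul, integral_const_mul, hV]
        change _ = _ * lapZ L x + _
        ring
    _ ≤ lapZ L z := by
        unfold lapZ
        refine integral_mono (lap_integrable hL (by fun_prop)) (lap_integrable hL (by fun_prop))
          fun y => ?_
        have h1 := Real.add_one_le_exp (⟪z - x, y⟫ - ⟪z - x, m⟫)
        have h2 : Real.exp ⟪z, y⟫ = Real.exp ⟪z - x, m⟫ * Real.exp ⟪x, y⟫ *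
            Real.exp (⟪z - x, y⟫ - ⟪z - x, m⟫) := by
          rw [← Real.exp_add, ← Real.exp_add]; congr 1
          simp only [inner_sub_left]; ring
        simp only []
        rw [h2]
        have := mul_le_mul_of_nonneg_left h1
          (by positivity : 0 ≤ Real.exp ⟪z - x, m⟫ * Real.exp ⟪x, y⟫)
        linarith

theorem lapD_symm {d : ℕ} {L : Set (Euc d)} (hL : IsCompact L) (hv : 0 < volume L) (x : Euc d) :
    (lapD L x : Euc d →ₗ[ℝ] Euc d).IsSymmetric := by
  intro w w'
  change ⟪lapD L x w, w'⟫ = ⟪w, lapD L x w'⟫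
  rw [real_inner_comm, lapD_inner hL hv, lapD_inner hL hv]
  congr 2; ext y; ring

theorem vol_preimage_sub {d : ℕ} (m : Euc d) (S : Set (Euc d)) :
    volume ((fun y => y - m) ⁻¹' S) = volume S := by
  simp only [sub_eq_add_neg]
  exact measure_preimage_add_right volume (-m) S

theorem hyperplane_null {d : ℕ} (w m : Euc d) (hw : w ≠ 0) :
    volume {y : Euc d | ⟪w, y - m⟫ = 0} = 0 := by
  have h1 : {y : Euc d | ⟪w, y - m⟫ = 0} =
      (fun y => y - m) ⁻¹' ((innerSL ℝ w : Euc d →L[ℝ] ℝ).toLinearMap.ker : Set (Euc d)) := by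
    ext y; simp
  rw [h1, vol_preimage_sub]
  apply Measure.addHaar_submodule
  intro h
  have : w ∈ (innerSL ℝ w : Euc d →L[ℝ] ℝ).toLinearMap.ker := by rw [h]; trivial
  simp at this
  exact hw this

theorem lapD_pos {d : ℕ} {L : Set (Euc d)} (hL : IsCompact L) (hv : 0 < volume L) (x w : Euc d)
    (hw : w ≠ 0) : 0 < ⟪w, lapD L x w⟫ := by
  rw [lapD_inner hL hv]
  refine mul_pos (inv_pos.2 (lapZ_pos hL hv x)) ?_
  rw [setIntegral_pos_iff_support_of_nonneg_ae]
  · have : L \ {y : Euc d | ⟪w, y - lapM L x⟫ = 0} ⊆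
      (Function.support fun y : Euc d => Real.exp ⟪x, y⟫ * (⟪w, y - lapM L x⟫ * ⟪w, y - lapM L x⟫)) ∩ L := by
      rintro y ⟨hy, h2⟩
      refine ⟨?_, hy⟩
      simp only [mem_setOf_eq] at h2
      simp [h2, Real.exp_ne_zero]
    refine lt_of_lt_of_le ?_ (measure_mono this)
    rwa [measure_diff_null (hyperplane_null w _ hw)]
  · exact Filter.Eventually.of_forall fun y => mul_nonneg (Real.exp_pos _).le (mul_self_nonneg _)
  · exact lap_integrable hL (by fun_prop)

theorem lapM_injective {d : ℕ} {L : Set (Euc d)} (hL : IsCompact L) (hv : 0 < volume L) :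
    Function.Injective (lapM L) := by
  intro x z h
  by_contra hne
  have hw : z - x ≠ 0 := sub_ne_zero.2 (Ne.symm hne)
  have hder : ∀ s : ℝ, HasDerivAt (fun s : ℝ => ⟪z - x, lapM L (x + s • (z - x))⟫)
      ⟪z - x, lapD L (x + s • (z - x)) (z - x)⟫ s := by
    intro s
    have h1 : HasDerivAt (fun s : ℝ => x + s • (z - x)) (z - x) s := by
      simpa using ((hasDerivAt_id s).smul_const (z - x)).const_add x
    have h2 := (lapM_hasFDerivAt hL hv (x + s • (z - x))).comp_hasDerivAt s h1
    have h3 := ((innerSL ℝ (z - x)).hasFDerivAt (x := lapM L (x + s • (z - x)))).comp_hasDerivAt s h2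
    exact h3
  have hm : StrictMono (fun s : ℝ => ⟪z - x, lapM L (x + s • (z - x))⟫) :=
    strictMono_of_deriv_pos fun s => by rw [(hder s).deriv]; exact lapD_pos hL hv _ _ hw
  have := hm (zero_lt_one' ℝ)
  simp [h] at this

theorem lapD_det {d : ℕ} (hd : 0 < d) {L : Set (Euc d)} (hL : IsCompact L) (hv : 0 < volume L)
    (x : Euc d) {H : ℝ} (hH : ∀ y ∈ L, Real.exp ⟪x, y⟫ ≤ H) :
    0 < (lapD L x).det ∧
    lapZ L x ^ 2 ≤ 4 * H ^ 2 * ωd d ^ 2 * (2 * d) ^ d * (lapD L x).det := by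
  have hZ := lapZ_pos hL hv x
  have hsym := lapD_symm hL hv x
  have hfr : Module.finrank ℝ (Euc d) = d := by simp
  set b := hsym.eigenvectorBasis hfr
  set l := hsym.eigenvalues hfr
  have hDb : ∀ i, lapD L x (b i) = l i • b i := fun i => hsym.apply_eigenvectorBasis hfr i
  have hlb : ∀ i, l i = ⟪b i, lapD L x (b i)⟫ := by
    intro i; rw [hDb, inner_smul_right, real_inner_self_eq_norm_sq, b.orthonormal.1 i]; simp
  have hlpos : ∀ i, 0 < l i := by
    intro i; rw [hlb]; exact lapD_pos hL hv _ _ (b.orthonormal.ne_zero i)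
  have hdet : (lapD L x).det = ∏ i, l i := by
    have := hsym.det_eq_prod_eigenvalues hfr
    simpa using this
  have hdpos : 0 < (lapD L x).det := by rw [hdet]; exact Finset.prod_pos fun i _ => hlpos i
  refine ⟨hdpos, ?_⟩
  let W : Euc d →ₗ[ℝ] Euc d :=
    Matrix.toLin b.toBasis b.toBasis (Matrix.diagonal fun i => (√(l i))⁻¹)
  have hWb : ∀ i, W (b i) = (√(l i))⁻¹ • b i := by
    intro i
    have := Matrix.toLin_self b.toBasis b.toBasis (Matrix.diagonal fun i => (√(l i))⁻¹) i
    simp only [OrthonormalBasis.coe_toBasis] at this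
    rw [this, Finset.sum_eq_single i] <;> simp +contextual [Matrix.diagonal]
  have hWi : ∀ i y, ⟪b i, W y⟫ = (√(l i))⁻¹ * ⟪b i, y⟫ := by
    intro i y
    conv_lhs => rw [← b.sum_repr' y, map_sum, inner_sum]
    rw [Finset.sum_eq_single i]
    · rw [map_smul, hWb, inner_smul_right, inner_smul_right, real_inner_self_eq_norm_sq, b.orthonormal.1 i]
      ring
    · intro j _ hj
      rw [map_smul, hWb, inner_smul_right, inner_smul_right, b.orthonormal.2 (Ne.symm hj)]; simp
    · simp
  have hWn : ∀ y, ‖W y‖ ^ 2 = ∑ i, (l i)⁻¹ * (⟪b i, y⟫ * ⟪b i, y⟫) := by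
    intro y
    rw [← b.sum_sq_norm_inner_right (W y)]
    refine Finset.sum_congr rfl fun i _ => ?_
    rw [hWi, Real.norm_eq_abs, sq_abs, mul_pow, inv_pow, Real.sq_sqrt (hlpos i).le]; ring
  have hWdet : LinearMap.det W = (√((lapD L x).det))⁻¹ := by
    rw [LinearMap.det_toLin, Matrix.det_diagonal, hdet, Real.sqrt_prod _ fun i _ => (hlpos i).le,
      Finset.prod_inv_distrib]
  set m := lapM L x
  have hWc : Continuous W := W.continuous_of_finiteDimensional
  have hIntg : ∫ y in L, Real.exp ⟪x, y⟫ * ‖W (y - m)‖ ^ 2 = d * lapZ L x := by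
    simp_rw [hWn, Finset.mul_sum]
    rw [integral_finset_sum]
    · have : ∀ i, ∫ y in L, Real.exp ⟪x, y⟫ * ((l i)⁻¹ * (⟪b i, y - m⟫ * ⟪b i, y - m⟫)) = lapZ L x := by
        intro i
        have h1 := lapD_inner hL hv x (b i) (b i)
        rw [← hlb] at h1
        have h2 : ∀ y, Real.exp ⟪x, y⟫ * ((l i)⁻¹ * (⟪b i, y - m⟫ * ⟪b i, y - m⟫)) =
          (l i)⁻¹ * (Real.exp ⟪x, y⟫ * (⟪b i, y - m⟫ * ⟪b i, y - m⟫)) := fun y => by ring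
        simp_rw [h2]
        rw [integral_const_mul]
        have h3 : ∫ y in L, Real.exp ⟪x, y⟫ * (⟪b i, y - m⟫ * ⟪b i, y - m⟫) = lapZ L x * l i := by
          rw [h1, ← mul_assoc, mul_inv_cancel₀ hZ.ne', one_mul]
        rw [h3]; have := (hlpos i).ne'; field_simp
      simp [this]
    · intro i _
      exact lap_integrable hL (by fun_prop)
  have hd0 : (0:ℝ) < d := by exact_mod_cast hd
  set S := {y : Euc d | ‖W (y - m)‖ ≤ √(2 * d)}
  have hSc : IsClosed S := isClosed_le (by fun_prop) continuous_const
  have hSv : volume S = ENNReal.ofReal (√((lapD L x).det) * (√(2 * d) ^ d * ωd d)) := by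
    have h1 : S = (fun y => y - m) ⁻¹' (W ⁻¹' closedBall 0 (√(2 * d))) := by
      ext y; simp [S]
    rw [h1, vol_preimage_sub, Measure.addHaar_preimage_linearMap _ (by rw [hWdet]; positivity),
      Measure.addHaar_closedBall _ _ (by positivity), hWdet, inv_inv, hfr, abs_of_nonneg (by positivity),
      ENNReal.ofReal_mul (by positivity), ENNReal.ofReal_mul (by positivity)]
    congr 2
    rw [ωd, ENNReal.ofReal_toReal measure_ball_lt_top.ne]
  have hωnn : 0 ≤ ωd d := ENNReal.toReal_nonneg
  have hSr : volume.real S = √((lapD L x).det) * (√(2 * d) ^ d * ωd d) := by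
    rw [measureReal_def, hSv, ENNReal.toReal_ofReal (by positivity)]
  have hSfin : volume S ≠ ⊤ := by rw [hSv]; exact ENNReal.ofReal_ne_top
  have hH0 : 0 ≤ H := by
    have : L.Nonempty := nonempty_of_measure_ne_zero hv.ne'
    obtain ⟨y, hy⟩ := this
    exact (Real.exp_pos _).le.trans (hH y hy)
  have key : lapZ L x ≤ (∫ y in L, S.indicator (fun _ => H) y) +
      (2 * (d:ℝ))⁻¹ * ∫ y in L, Real.exp ⟪x, y⟫ * ‖W (y - m)‖ ^ 2 := by
    have hiS : Integrable (S.indicator fun _ => H) :=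
      (integrable_indicator_iff hSc.measurableSet).2 (integrableOn_const hSfin)
    rw [← integral_const_mul, ← integral_add hiS.integrableOn (lap_integrable hL (by fun_prop))]
    refine setIntegral_mono_on (lap_integrable hL (by fun_prop))
      (hiS.integrableOn.add (lap_integrable hL (by fun_prop))) hL.measurableSet fun y hy => ?_
    by_cases hyS : y ∈ S
    · rw [indicator_of_mem hyS]
      have := hH y hy
      have h0 : 0 ≤ (2 * (d:ℝ))⁻¹ * (Real.exp ⟪x, y⟫ * ‖W (y - m)‖ ^ 2) := by positivity
      linarith
    · rw [indicator_of_notMem hyS, zero_add]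
      have h1 : √(2 * d) < ‖W (y - m)‖ := not_le.1 hyS
      have h2 : 2 * (d:ℝ) ≤ ‖W (y - m)‖ ^ 2 := (Real.sqrt_le_left (by positivity)).1 h1.le
      rw [le_inv_mul_iff₀ (by positivity), mul_comm]
      gcongr
  have h4 : ∫ y in L, S.indicator (fun _ => H) y ≤ H * (√((lapD L x).det) * (√(2 * d) ^ d * ωd d)) := by
    rw [← hSr]
    have hiS : Integrable (S.indicator fun _ => H) :=
      (integrable_indicator_iff hSc.measurableSet).2 (integrableOn_const hSfin)
    calc ∫ y in L, S.indicator (fun _ => H) y ≤ ∫ y, S.indicator (fun _ => H) y :=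
          setIntegral_le_integral hiS (Filter.Eventually.of_forall fun y => indicator_nonneg (fun _ _ => hH0) _)
      _ = H * volume.real S := by
        rw [integral_indicator hSc.measurableSet, setIntegral_const, smul_eq_mul, mul_comm]
  rw [hIntg] at key
  have h5 : (2 * (d:ℝ))⁻¹ * (d * lapZ L x) = lapZ L x / 2 := by field_simp
  have h6 : lapZ L x ≤ 2 * (H * (√((lapD L x).det) * (√(2 * d) ^ d * ωd d))) := by linarith
  calc lapZ L x ^ 2 ≤ (2 * (H * (√((lapD L x).det) * (√(2 * d) ^ d * ωd d)))) ^ 2 := by gcongr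
    _ = 4 * H ^ 2 * ωd d ^ 2 * (√(2 * d) ^ 2) ^ d * (√((lapD L x).det)) ^ 2 := by ring
    _ = _ := by rw [Real.sq_sqrt hdpos.le, Real.sq_sqrt (by positivity)]

theorem polarSet_isClosed {d : ℕ} (S : Set (Euc d)) : IsClosed (polarSet S) := by
  have : polarSet S = ⋂ x ∈ S, {y | ⟪x, y⟫ ≤ 1} := by ext y; simp [polarSet]
  rw [this]
  exact isClosed_biInter fun x _ => isClosed_le (by fun_prop) continuous_const

/-- Weak Blaschke–Santaló inequality. -/
theorem weak_santalo {d : ℕ} (hd : 0 < d) {K : Set (Euc d)} (hK : IsCompact K) (hc : Convex ℝ K)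
    (hs : ∀ v ∈ K, -v ∈ K) (hv : 0 < volume K) :
    volume K * volume (polarSet K) ≤ ENNReal.ofReal ((8 * Real.exp 4) ^ d * ωd d ^ 2) := by
  set P := (d : ℝ) • polarSet K
  have hd0 : (0:ℝ) < d := by exact_mod_cast hd
  have hPm : MeasurableSet P := ((polarSet_isClosed K).measurableSet).const_smul₀ _
  have hKfin : volume K ≠ ⊤ := hK.measure_lt_top.ne
  set k := volume.real K
  have hk : 0 < k := ENNReal.toReal_pos hv.ne' hKfin
  have hω : 0 < ωd d := ENNReal.toReal_pos (measure_ball_pos _ _ one_pos).ne' measure_ball_lt_top.ne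
  set c : ℝ := k ^ 2 / ((4 * Real.exp 4 ^ d) * ωd d ^ 2 * (2 * d) ^ d)
  have hdet : ∀ x ∈ P, c ≤ |(lapD K x).det| := by
    rintro _ ⟨u, hu, rfl⟩
    have h1 : ∀ y ∈ K, |⟪(d:ℝ) • u, y⟫| ≤ d := by
      intro y hy
      have h2 := hu y hy
      have h3 := hu (-y) (hs y hy)
      rw [inner_neg_left] at h3
      rw [inner_smul_left, real_inner_comm, conj_trivial, abs_mul, abs_of_pos hd0]
      have : |⟪y, u⟫| ≤ 1 := abs_le.2 ⟨by linarith, h2⟩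
      nlinarith
    obtain ⟨h4, h5⟩ := lapD_det hd hK hv ((d:ℝ) • u) (H := Real.exp d)
      (fun y hy => Real.exp_le_exp.2 (abs_le.1 (h1 y hy)).2)
    have h6 : Real.exp (-d) * k ≤ lapZ K ((d:ℝ) • u) := by
      have : Real.exp (-d) * k = ∫ y in K, Real.exp (-(d:ℝ)) := by
        rw [setIntegral_const, smul_eq_mul, mul_comm]
      rw [this]
      unfold lapZ
      exact setIntegral_mono_on (lap_integrable hK (by fun_prop)) (lap_integrable hK (by fun_prop))
        hK.measurableSet fun y hy => Real.exp_le_exp.2 (abs_le.1 (h1 y hy)).1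
    rw [abs_of_pos h4, div_le_iff₀ (by positivity)]
    have h7 : (Real.exp (-d) * k) ^ 2 ≤ _ := (pow_le_pow_left₀ (by positivity) h6 2).trans h5
    have h8 : Real.exp 4 ^ d = Real.exp d ^ 2 * Real.exp d ^ 2 := by
      rw [← Real.exp_nat_mul, ← pow_add, ← Real.exp_nat_mul]; congr 1; push_cast; ring
    rw [h8]
    have h9 : Real.exp (-d) * Real.exp d = 1 := by rw [← Real.exp_add]; simp
    calc k ^ 2 = (Real.exp (-d) * Real.exp d) ^ 2 * k ^ 2 := by rw [h9]; ring
      _ = Real.exp d ^ 2 * (Real.exp (-d) * k) ^ 2 := by ring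
      _ ≤ Real.exp d ^ 2 * _ := mul_le_mul_of_nonneg_left h7 (by positivity)
      _ = _ := by ring
  have hc0 : 0 < c := by positivity
  have himg := lintegral_abs_det_fderiv_eq_addHaar_image volume hPm
    (fun x _ => (lapM_hasFDerivAt hK hv x).hasFDerivWithinAt) (lapM_injective hK hv).injOn
  have hsub : lapM K '' P ⊆ K := by
    rintro _ ⟨x, _, rfl⟩; exact lapM_mem_closedConvex hK hc hv x
  have h10 : ENNReal.ofReal c * volume P ≤ volume K := by
    refine le_trans ?_ (measure_mono hsub)
    rw [← himg, ← setLIntegral_const]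
    exact setLIntegral_mono' hPm fun x hx => ENNReal.ofReal_le_ofReal (hdet x hx)
  have hPv : volume P = ENNReal.ofReal ((d:ℝ) ^ d) * volume (polarSet K) := by
    simp only [P]; rw [Measure.addHaar_smul]; simp
  have hpfin : volume (polarSet K) ≠ ⊤ := by
    intro h
    rw [hPv, h, ENNReal.mul_top (by simp [hd.ne']), ENNReal.mul_top (by simp [hc0])] at h10
    exact hKfin (top_le_iff.1 h10)
  set q := volume.real (polarSet K)
  have hq : volume (polarSet K) = ENNReal.ofReal q := by simp [q, measureReal_def, hpfin]
  have hkk : volume K = ENNReal.ofReal k := by simp [k, measureReal_def, hKfin]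
  have hq0 : 0 ≤ q := measureReal_nonneg
  rw [hPv, hq, hkk, ← ENNReal.ofReal_mul (by positivity), ← ENNReal.ofReal_mul (by positivity),
    ENNReal.ofReal_le_ofReal_iff hk.le] at h10
  rw [hq, hkk, ← ENNReal.ofReal_mul hk.le]
  apply ENNReal.ofReal_le_ofReal
  have h11 : c * ((d:ℝ) ^ d * q) = k * (k * q) / (4 * Real.exp 4 ^ d * ωd d ^ 2 * 2 ^ d) := by
    simp only [c]; rw [mul_pow]; field_simp
  rw [h11, div_le_iff₀ (by positivity)] at h10
  have h12 : k * q ≤ 4 * Real.exp 4 ^ d * ωd d ^ 2 * 2 ^ d := le_of_mul_le_mul_left h10 hk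
  have h13 : (4:ℝ) ≤ 4 ^ d := le_self_pow₀ (by norm_num) hd.ne'
  calc k * q ≤ 4 * (Real.exp 4 ^ d * ωd d ^ 2 * 2 ^ d) := by linarith
    _ ≤ 4 ^ d * (Real.exp 4 ^ d * ωd d ^ 2 * 2 ^ d) := by gcongr
    _ = _ := by rw [show (8:ℝ) = 4 * 2 by norm_num, mul_pow, mul_pow]; ring

theorem entire_integral {α : Type*} [MeasurableSpace α] {μ : Measure α} (f : ℂ → α → ℂ)
    (hm : ∀ z, AEStronglyMeasurable (f z) μ) (hd : ∀ a, Differentiable ℂ (fun z => f z a))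
    (hb : ∀ R : ℝ, 0 < R → ∃ B : α → ℝ, Integrable B μ ∧ ∀ z : ℂ, ‖z‖ ≤ R → ∀ a, ‖f z a‖ ≤ B a) :
    Differentiable ℂ (fun z => ∫ a, f z a ∂μ) := by
  intro z₀
  obtain ⟨B, hB, hfB⟩ := hb (‖z₀‖ + 2) (by positivity)
  have hball : ∀ z ∈ ball z₀ 1, ∀ w ∈ closedBall z 1, ‖w‖ ≤ ‖z₀‖ + 2 := by
    intro z hz w hw
    rw [mem_ball, dist_eq_norm] at hz
    rw [mem_closedBall, dist_eq_norm] at hw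
    have h1 : w = z₀ + (z - z₀) + (w - z) := by ring
    rw [h1]
    have := norm_add_le (z₀ + (z - z₀)) (w - z)
    have := norm_add_le z₀ (z - z₀)
    linarith
  have hder : ∀ a, ∀ z ∈ ball z₀ 1, ‖deriv (fun z => f z a) z‖ ≤ B a := by
    intro a z hz
    have := Complex.norm_deriv_le_of_forall_mem_sphere_norm_le (f := fun z => f z a) (c := z)
      (R := 1) (C := B a) one_pos (hd a).diffContOnCl
      (fun w hw => hfB w (hball z hz w (sphere_subset_closedBall hw)) a)
    simpa using this
  have hmeas : AEStronglyMeasurable (fun a => deriv (fun z => f z a) z₀) μ := by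
    have ht : ∀ a, Filter.Tendsto (fun k : ℕ => ((1 / ((k:ℂ) + 1)))⁻¹ * (f (z₀ + 1 / ((k:ℂ) + 1)) a - f z₀ a))
        Filter.atTop (nhds (deriv (fun z => f z a) z₀)) := by
      intro a
      have h1 := ((hd a) z₀).hasDerivAt
      have h2 := h1.tendsto_slope_zero
      have h3 : Filter.Tendsto (fun k : ℕ => 1 / ((k:ℂ) + 1)) Filter.atTop (nhdsWithin 0 {0}ᶜ) := by
        rw [tendsto_nhdsWithin_iff]
        refine ⟨tendsto_one_div_add_atTop_nhds_zero_nat (𝕜 := ℂ), Filter.Eventually.of_forall fun k => ?_⟩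
        simp only [mem_compl_iff, mem_singleton_iff, one_div, inv_eq_zero]
        exact_mod_cast Nat.succ_ne_zero k
      exact h2.comp h3
    refine aestronglyMeasurable_of_tendsto_ae Filter.atTop (f := fun (k : ℕ) a => ((1 / ((k:ℂ) + 1)))⁻¹ * (f (z₀ + 1 / ((k:ℂ) + 1)) a - f z₀ a)) (fun k => ?_)
      (Filter.Eventually.of_forall ht)
    exact ((hm _).sub (hm _)).const_mul _
  have := hasDerivAt_integral_of_dominated_loc_of_deriv_le (μ := μ) (F := f)
    (F' := fun z a => deriv (fun z => f z a) z) (x₀ := z₀) (s := ball z₀ 1) (bound := B)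
    (ball_mem_nhds _ one_pos) (Filter.Eventually.of_forall hm)
    (hB.mono' (hm _) (Filter.Eventually.of_forall fun a => hfB z₀ (by linarith [norm_nonneg z₀]) a)) hmeas
    (Filter.Eventually.of_forall hder) hB
    (Filter.Eventually.of_forall fun a z _ => ((hd a) z).hasDerivAt)
  exact this.2.differentiableAt

theorem differentiable_det {ι : Type*} [Fintype ι] [DecidableEq ι] (M : ℂ → Matrix ι ι ℂ)
    (h : ∀ i j, Differentiable ℂ fun z => M z i j) : Differentiable ℂ fun z => (M z).det := by
  simp only [Matrix.det_apply']
  fun_prop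

theorem measurable_det {ι α : Type*} [Fintype ι] [DecidableEq ι] [MeasurableSpace α] (M : α → Matrix ι ι ℂ)
    (h : ∀ i j, Measurable fun z => M z i j) : Measurable fun z => (M z).det := by
  simp only [Matrix.det_apply']
  fun_prop

theorem entire_const {f : ℂ → ℂ} {c : ℂ} (hf : Differentiable ℂ f)
    (h : ∀ᶠ t : ℝ in nhds 0, f t = c) (z : ℂ) : f z = c := by
  have hf' : AnalyticOnNhd ℂ f univ := fun z _ => hf.analyticAt z
  have hc : AnalyticOnNhd ℂ (fun _ : ℂ => c) univ := fun z _ => analyticAt_const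
  have h1 : Filter.Tendsto (fun t : ℝ => (t:ℂ)) (nhdsWithin 0 {0}ᶜ) (nhdsWithin 0 {0}ᶜ) := by
    rw [tendsto_nhdsWithin_iff]
    refine ⟨?_, ?_⟩
    · have : Filter.Tendsto (fun t : ℝ => (t:ℂ)) (nhds 0) (nhds ((0:ℝ):ℂ)) :=
        Complex.continuous_ofReal.tendsto 0
      simpa using this.mono_left nhdsWithin_le_nhds
    · filter_upwards [self_mem_nhdsWithin] with t ht
      simpa using ht
  have h2 : ∃ᶠ z : ℂ in nhdsWithin 0 {0}ᶜ, f z = (fun _ => c) z :=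
    h1.frequently ((h.filter_mono nhdsWithin_le_nhds).frequently)
  exact congrFun (hf'.eq_of_frequently_eq hc h2) z

/-- Jacobian matrix. -/
def mA {n : ℕ} (g : Euc n → Euc n) (x : Euc n) : Matrix (Fin n) (Fin n) ℝ :=
  Matrix.of fun i j => (fderiv ℝ g x (EuclideanSpace.single j 1)) i

def mAC {n : ℕ} (g : Euc n → Euc n) (x : Euc n) : Matrix (Fin n) (Fin n) ℂ :=
  (mA g x).map Complex.ofReal

def bM {n : ℕ} (g : Euc n → Euc n) (t s : ℂ) (p : Euc n × Euc n) :
    Matrix (Fin n ⊕ Fin n) (Fin n ⊕ Fin n) ℂ :=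
  Matrix.fromBlocks (1 + t • mAC g p.1) (-(s • mAC g p.2)) (s • mAC g p.1) (1 + t • mAC g p.2)

def qF {n : ℕ} (g : Euc n → Euc n) (t s : ℂ) (p : Euc n × Euc n) : ℂ :=
  ((‖p.1‖ ^ 2 + ‖p.2‖ ^ 2 : ℝ) : ℂ) + t * ((2 * (⟪p.1, g p.1⟫ + ⟪p.2, g p.2⟫) : ℝ) : ℂ) +
    s * ((2 * (⟪p.2, g p.1⟫ - ⟪p.1, g p.2⟫) : ℝ) : ℂ) +
    (t ^ 2 + s ^ 2) * ((‖g p.1‖ ^ 2 + ‖g p.2‖ ^ 2 : ℝ) : ℂ)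

def fJ {n : ℕ} (g : Euc n → Euc n) (t s : ℂ) (p : Euc n × Euc n) : ℂ :=
  Complex.exp (-(1 / 2) * qF g t s p) * (bM g t s p).det

theorem mAC_norm {n : ℕ} {g : Euc n → Euc n} {C : ℝ} (hA : ∀ x, ‖fderiv ℝ g x‖ ≤ C) (x : Euc n) (i j) :
    ‖mAC g x i j‖ ≤ C := by
  simp only [mAC, Matrix.map_apply, mA, Matrix.of_apply, Complex.norm_real]
  refine (PiLp.norm_apply_le _ i).trans (((fderiv ℝ g x).le_opNorm _).trans ?_)
  simpa using hA x

theorem fJ_meas {n : ℕ} {g : Euc n → Euc n} (hg : Differentiable ℝ g) (t s : ℂ) :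
    Measurable (fJ g t s) := by
  have hc := hg.continuous
  have hmA : ∀ i j, Measurable fun x => mAC g x i j := by
    intro i j
    simp only [mAC, Matrix.map_apply, mA, Matrix.of_apply]
    refine Complex.measurable_ofReal.comp ?_
    have h1 := measurable_fderiv_apply_const ℝ g (EuclideanSpace.single j (1:ℝ))
    exact (EuclideanSpace.proj (𝕜 := ℝ) i).continuous.measurable.comp h1
  have h1 : ∀ i j, Measurable fun p : Euc n × Euc n => mAC g p.1 i j := fun i j => (hmA i j).comp measurable_fst
  have h2 : ∀ i j, Measurable fun p : Euc n × Euc n => mAC g p.2 i j := fun i j => (hmA i j).comp measurable_snd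
  refine Measurable.mul ?_ (measurable_det _ ?_)
  · unfold qF
    apply Continuous.measurable
    fun_prop
  · rintro (i | i) (j | j) <;> simp only [bM, Matrix.fromBlocks_apply₁₁, Matrix.fromBlocks_apply₁₂,
      Matrix.fromBlocks_apply₂₁, Matrix.fromBlocks_apply₂₂, Matrix.add_apply, Matrix.neg_apply, Matrix.smul_apply] <;>
      fun_prop

theorem fJ_diff_t {n : ℕ} (g : Euc n → Euc n) (s : ℂ) (p) :
    Differentiable ℂ (fun t => fJ g t s p) := by
  refine Differentiable.mul ?_ (differentiable_det _ ?_)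
  · unfold qF; fun_prop
  · rintro (i | i) (j | j) <;> simp only [bM, Matrix.fromBlocks_apply₁₁, Matrix.fromBlocks_apply₁₂,
      Matrix.fromBlocks_apply₂₁, Matrix.fromBlocks_apply₂₂, Matrix.add_apply, Matrix.neg_apply, Matrix.smul_apply] <;>
      fun_prop

theorem fJ_diff_s {n : ℕ} (g : Euc n → Euc n) (t : ℂ) (p) :
    Differentiable ℂ (fun s => fJ g t s p) := by
  refine Differentiable.mul ?_ (differentiable_det _ ?_)
  · unfold qF; fun_prop
  · rintro (i | i) (j | j) <;> simp only [bM, Matrix.fromBlocks_apply₁₁, Matrix.fromBlocks_apply₁₂,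
      Matrix.fromBlocks_apply₂₁, Matrix.fromBlocks_apply₂₂, Matrix.add_apply, Matrix.neg_apply, Matrix.smul_apply] <;>
      fun_prop

theorem gauss_integrable {n : ℕ} {b : ℝ} (hb : 0 < b) :
    Integrable (fun v : Euc n => Real.exp (-b * ‖v‖ ^ 2)) := by
  have := GaussianFourier.integrable_cexp_neg_mul_sq_norm_add (V := Euc n) (b := b) (by simpa using hb) 0 0
  have h2 := this.norm
  refine h2.congr (Filter.Eventually.of_forall fun v => ?_)
  simp only [Complex.norm_exp]
  congr 1
  simp [← Complex.ofReal_pow]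

theorem fJ_bound {n : ℕ} {g : Euc n → Euc n} {C : ℝ} (hC : ∀ x, ‖g x‖ ≤ C)
    (hA : ∀ x, ‖fderiv ℝ g x‖ ≤ C) (R : ℝ) (hR : 0 < R) :
    ∃ B : Euc n × Euc n → ℝ, Integrable B ∧ ∀ t s : ℂ, ‖t‖ ≤ R → ‖s‖ ≤ R → ∀ p, ‖fJ g t s p‖ ≤ B p := by
  have hC0 : 0 ≤ C := (norm_nonneg _).trans (hC 0)
  refine ⟨fun p => (Real.exp (-(1/4) * ‖p.1‖ ^ 2) * Real.exp (-(1/4) * ‖p.2‖ ^ 2)) *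
    (Real.exp (10 * R ^ 2 * C ^ 2) * ((Fintype.card (Fin n ⊕ Fin n)).factorial • (1 + R * C) ^ Fintype.card (Fin n ⊕ Fin n))), ?_, ?_⟩
  · refine Integrable.mul_const ?_ _
    exact (gauss_integrable (by norm_num)).mul_prod (gauss_integrable (by norm_num))
  · intro t s ht hs p
    have hRC : 0 ≤ R * C := by positivity
    have hdet : ‖(bM g t s p).det‖ ≤
        ((Fintype.card (Fin n ⊕ Fin n)).factorial • (1 + R * C) ^ Fintype.card (Fin n ⊕ Fin n)) := by
      refine Matrix.det_le (abv := NormedField.toAbsoluteValue ℂ) ?_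
      have hsm : ∀ (z : ℂ) x i j, ‖z‖ ≤ R → ‖z * mAC g x i j‖ ≤ R * C := fun z x i j hz => by
        rw [norm_mul]; exact mul_le_mul hz (mAC_norm hA _ _ _) (norm_nonneg _) hR.le
      have h1 : ∀ i j : Fin n, ‖(1 : Matrix (Fin n) (Fin n) ℂ) i j‖ ≤ 1 := by
        intro i j; rw [Matrix.one_apply]; split_ifs <;> simp
      rintro (i | i) (j | j) <;> simp only [bM, Matrix.fromBlocks_apply₁₁, Matrix.fromBlocks_apply₁₂,
        Matrix.fromBlocks_apply₂₁, Matrix.fromBlocks_apply₂₂, Matrix.add_apply, Matrix.neg_apply,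
        Matrix.smul_apply, NormedField.toAbsoluteValue, AbsoluteValue.coe_mk, MulHom.coe_mk, smul_eq_mul]
      · exact (norm_add_le _ _).trans (add_le_add (h1 _ _) (hsm _ _ _ _ ht))
      · rw [norm_neg]; linarith [hsm s p.2 i j hs]
      · linarith [hsm s p.1 i j hs]
      · exact (norm_add_le _ _).trans (add_le_add (h1 _ _) (hsm _ _ _ _ ht))
    have hexp : ‖Complex.exp (-(1 / 2) * qF g t s p)‖ ≤
        (Real.exp (-(1/4) * ‖p.1‖ ^ 2) * Real.exp (-(1/4) * ‖p.2‖ ^ 2)) * Real.exp (10 * R ^ 2 * C ^ 2) := by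
      rw [Complex.norm_exp, ← Real.exp_add, ← Real.exp_add, Real.exp_le_exp]
      have hre : (-(1 / 2) * qF g t s p).re = -(1/2) * (qF g t s p).re := by
        have : (-(1/2) : ℂ) = ((-(1/2) : ℝ) : ℂ) := by push_cast; rfl
        rw [this, Complex.re_ofReal_mul]
      rw [hre]
      have hi : ∀ x y : Euc n, |⟪x, g y⟫| ≤ ‖x‖ * C := fun x y =>
        (abs_real_inner_le_norm _ _).trans (by gcongr; exact hC y)
      have hq : (‖p.1‖ ^ 2 + ‖p.2‖ ^ 2) - (R * (2 * (‖p.1‖ * C + ‖p.2‖ * C)) + R * (2 * (‖p.2‖ * C + ‖p.1‖ * C))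
          + (R ^ 2 + R ^ 2) * (C ^ 2 + C ^ 2)) ≤ (qF g t s p).re := by
        unfold qF
        rw [Complex.add_re, Complex.add_re, Complex.add_re, Complex.ofReal_re, Complex.re_mul_ofReal,
          Complex.re_mul_ofReal, Complex.re_mul_ofReal]
        have a1 : |t.re * (2 * (⟪p.1, g p.1⟫ + ⟪p.2, g p.2⟫))| ≤ R * (2 * (‖p.1‖ * C + ‖p.2‖ * C)) := by
          rw [abs_mul, abs_mul, abs_two]
          gcongr
          · exact (Complex.abs_re_le_norm t).trans ht
          · exact (abs_add_le _ _).trans (add_le_add (hi _ _) (hi _ _))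
        have a2 : |s.re * (2 * (⟪p.2, g p.1⟫ - ⟪p.1, g p.2⟫))| ≤ R * (2 * (‖p.2‖ * C + ‖p.1‖ * C)) := by
          rw [abs_mul, abs_mul, abs_two]
          gcongr
          · exact (Complex.abs_re_le_norm s).trans hs
          · exact (abs_sub _ _).trans (add_le_add (hi _ _) (hi _ _))
        have a3 : |(t ^ 2 + s ^ 2).re * (‖g p.1‖ ^ 2 + ‖g p.2‖ ^ 2)| ≤ (R ^ 2 + R ^ 2) * (C ^ 2 + C ^ 2) := by
          rw [abs_mul]
          gcongr
          · refine (Complex.abs_re_le_norm _).trans ((norm_add_le _ _).trans ?_)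
            rw [norm_pow, norm_pow]; gcongr
          · rw [abs_of_nonneg (by positivity)]
            gcongr <;> exact hC _
        have := (abs_le.1 a1).1
        have := (abs_le.1 a2).1
        have := (abs_le.1 a3).1
        linarith
      nlinarith [sq_nonneg (‖p.1‖ / 2 - 2 * R * C), sq_nonneg (‖p.2‖ / 2 - 2 * R * C)]
    rw [fJ, norm_mul]
    beta_reduce
    rw [← mul_assoc]
    exact mul_le_mul hexp hdet (norm_nonneg _) (by positivity)

instance instHaarProd (n : ℕ) : (volume : Measure (Euc n × Euc n)).IsAddHaarMeasure := by
  rw [Measure.volume_eq_prod]; infer_instance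

theorem gauss_prod {n : ℕ} :
    ∫ p : Euc n × Euc n, Real.exp (-(1/2) * (‖p.1‖ ^ 2 + ‖p.2‖ ^ 2)) = (2 * Real.pi) ^ n := by
  have h1 : ∀ p : Euc n × Euc n, Real.exp (-(1/2) * (‖p.1‖ ^ 2 + ‖p.2‖ ^ 2)) =
      Real.exp (-(1/2) * ‖p.1‖ ^ 2) * Real.exp (-(1/2) * ‖p.2‖ ^ 2) := by
    intro p; rw [← Real.exp_add]; ring_nf
  simp_rw [h1]
  rw [Measure.volume_eq_prod, integral_prod_mul (fun v : Euc n => Real.exp (-(1/2) * ‖v‖ ^ 2)) (fun v : Euc n => Real.exp (-(1/2) * ‖v‖ ^ 2)),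
    GaussianFourier.integral_rexp_neg_mul_sq_norm (by norm_num)]
  rw [← Real.rpow_add (by positivity), ← Real.rpow_natCast]
  congr 1
  · ring
  · simp

/-- Matrix of a linear map on the product. -/
theorem det_block {n : ℕ} (P Q R S : Euc n →L[ℝ] Euc n) :
    (((P.comp (ContinuousLinearMap.fst ℝ _ _) + Q.comp (ContinuousLinearMap.snd ℝ _ _)).prod
      (R.comp (ContinuousLinearMap.fst ℝ _ _) + S.comp (ContinuousLinearMap.snd ℝ _ _)) :
        Euc n × Euc n →L[ℝ] Euc n × Euc n)).det =
    (Matrix.fromBlocks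
      (Matrix.of fun i j : Fin n => (P (EuclideanSpace.single j 1)) i)
      (Matrix.of fun i j : Fin n => (Q (EuclideanSpace.single j 1)) i)
      (Matrix.of fun i j : Fin n => (R (EuclideanSpace.single j 1)) i)
      (Matrix.of fun i j : Fin n => (S (EuclideanSpace.single j 1)) i)).det := by
  rw [ContinuousLinearMap.det]
  let b := (EuclideanSpace.basisFun (Fin n) ℝ).toBasis
  rw [← LinearMap.det_toMatrix (b.prod b)]
  congr 1
  ext i j
  rcases i with i | i <;> rcases j with j | j <;> simp [LinearMap.toMatrix_apply, b, Module.Basis.prod_apply, Module.Basis.prod_repr_inl, Module.Basis.prod_repr_inr]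

def dFc {n : ℕ} (g : Euc n → Euc n) (t s : ℝ) (p : Euc n × Euc n) : Euc n × Euc n →L[ℝ] Euc n × Euc n :=
  (((1 + t • fderiv ℝ g p.1).comp (ContinuousLinearMap.fst ℝ _ _) + (-(s • fderiv ℝ g p.2)).comp (ContinuousLinearMap.snd ℝ _ _)).prod
      ((s • fderiv ℝ g p.1).comp (ContinuousLinearMap.fst ℝ _ _) + (1 + t • fderiv ℝ g p.2).comp (ContinuousLinearMap.snd ℝ _ _)))

theorem dFc_det {n : ℕ} (g : Euc n → Euc n) (t s : ℝ) (p : Euc n × Euc n) :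
    (bM g t s p).det = ((dFc g t s p).det : ℂ) := by
  rw [dFc, det_block]
  change _ = Complex.ofRealHom _
  rw [RingHom.map_det]
  congr 1
  ext i j
  rcases i with i | i <;> rcases j with j | j <;> simp [bM, mAC, mA, Matrix.one_apply, EuclideanSpace.single_apply]
  all_goals split_ifs <;> simp

def Fc {n : ℕ} (g : Euc n → Euc n) (t s : ℝ) (p : Euc n × Euc n) : Euc n × Euc n :=
  (p.1 + t • g p.1 - s • g p.2, s • g p.1 + (p.2 + t • g p.2))

theorem Fc_hasFDerivAt {n : ℕ} {g : Euc n → Euc n} (hg : Differentiable ℝ g) (t s : ℝ) (p : Euc n × Euc n) :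
    HasFDerivAt (Fc g t s) (dFc g t s p) p := by
  have h1 : HasFDerivAt (fun p : Euc n × Euc n => g p.1) ((fderiv ℝ g p.1).comp (ContinuousLinearMap.fst ℝ _ _)) p :=
    (hg p.1).hasFDerivAt.comp p hasFDerivAt_fst
  have h2 : HasFDerivAt (fun p : Euc n × Euc n => g p.2) ((fderiv ℝ g p.2).comp (ContinuousLinearMap.snd ℝ _ _)) p :=
    (hg p.2).hasFDerivAt.comp p hasFDerivAt_snd
  have h3 := ((hasFDerivAt_fst (𝕜 := ℝ) (p := p)).add (h1.const_smul t)).sub (h2.const_smul s)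
  have h4 := (h1.const_smul s).add ((hasFDerivAt_snd (𝕜 := ℝ) (p := p)).add (h2.const_smul t))
  have h5 := h3.prodMk h4
  refine HasFDerivAt.congr_fderiv h5 ?_
  rw [dFc]
  refine ContinuousLinearMap.ext fun v => Prod.ext ?_ ?_
  · simp; abel
  · simp

theorem dFc_sub_norm {n : ℕ} {g : Euc n → Euc n} {C : ℝ} (hC : 0 ≤ C)
    (hA : ∀ x, ‖fderiv ℝ g x‖ ≤ C) (t s : ℝ) (p : Euc n × Euc n) :
    ‖dFc g t s p - ContinuousLinearMap.id ℝ _‖ ≤ (|t| + |s|) * C := by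
  refine ContinuousLinearMap.opNorm_le_bound _ (by positivity) fun v => ?_
  have hb : ∀ (r : ℝ) (x : Euc n) (w : Euc n), ‖w‖ ≤ ‖v‖ → ‖r • fderiv ℝ g x w‖ ≤ |r| * (C * ‖v‖) := by
    intro r x w hw
    rw [norm_smul, Real.norm_eq_abs]
    gcongr
    exact ((fderiv ℝ g x).le_opNorm w).trans (mul_le_mul (hA x) hw (norm_nonneg _) hC)
  have e : (dFc g t s p - ContinuousLinearMap.id ℝ (Euc n × Euc n)) v =
      (t • fderiv ℝ g p.1 v.1 - s • fderiv ℝ g p.2 v.2, s • fderiv ℝ g p.1 v.1 + t • fderiv ℝ g p.2 v.2) := by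
    simp only [dFc, ContinuousLinearMap.sub_apply]
    ext1
    · simp; abel
    · simp; abel
  rw [e, Prod.norm_def]
  have e1 := norm_fst_le v
  have e2 := norm_snd_le v
  apply max_le
  · refine (norm_sub_le _ _).trans ?_
    linarith [hb t p.1 v.1 e1, hb s p.2 v.2 e2]
  · refine (norm_add_le _ _).trans ?_
    linarith [hb s p.1 v.1 e1, hb t p.2 v.2 e2]

theorem det_near_one (V : Type*) [NormedAddCommGroup V] [NormedSpace ℝ V] [FiniteDimensional ℝ V] :
    ∃ ε > 0, ∀ B : V →L[ℝ] V, ‖B - ContinuousLinearMap.id ℝ V‖ < ε → 0 < B.det := by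
  have h1 : Continuous (fun B : V →L[ℝ] V => B.det) := ContinuousLinearMap.continuous_det
  have h2 : (ContinuousLinearMap.id ℝ V).det = 1 := by simp [ContinuousLinearMap.det]
  have h3 : ∀ᶠ B in nhds (ContinuousLinearMap.id ℝ V), 0 < B.det :=
    h1.continuousAt.eventually (lt_mem_nhds (by beta_reduce; rw [h2]; exact one_pos))
  obtain ⟨ε, hε, h⟩ := Metric.eventually_nhds_iff.1 h3
  exact ⟨ε, hε, fun B hB => h (by rwa [dist_eq_norm])⟩

theorem Fc_bij {n : ℕ} {g : Euc n → Euc n} (hg : Differentiable ℝ g) {C : ℝ} (hC : 0 ≤ C)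
    (hA : ∀ x, ‖fderiv ℝ g x‖ ≤ C) {t s : ℝ} (hts : (|t| + |s|) * C < 1 / 2) :
    Function.Bijective (Fc g t s) := by
  have h0 : 0 ≤ (|t| + |s|) * C := by positivity
  let c : NNReal := ⟨(|t| + |s|) * C, h0⟩
  have happ : ApproximatesLinearOn (Fc g t s) ((ContinuousLinearEquiv.refl ℝ (Euc n × Euc n)) : Euc n × Euc n →L[ℝ] Euc n × Euc n) univ c := by
    intro p _ q _
    have := convex_univ.norm_image_sub_le_of_norm_hasFDerivWithin_le (f := fun p => Fc g t s p - p)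
      (f' := fun p => dFc g t s p - ContinuousLinearMap.id ℝ _) (C := (|t| + |s|) * C)
      (fun p _ => ((Fc_hasFDerivAt hg t s p).sub (hasFDerivAt_id p)).hasFDerivWithinAt)
      (fun p _ => dFc_sub_norm hC hA t s p) (mem_univ q) (mem_univ p)
    have e : Fc g t s p - Fc g t s q - ((ContinuousLinearEquiv.refl ℝ (Euc n × Euc n)) : Euc n × Euc n →L[ℝ] Euc n × Euc n) (p - q) = Fc g t s p - p - (Fc g t s q - q) := by
      change Fc g t s p - Fc g t s q - (p - q) = _
      abel
    rw [e]
    exact this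
  by_cases hs : Subsingleton (Euc n × Euc n)
  · exact ⟨fun a b _ => Subsingleton.elim _ _, fun b => ⟨b, Subsingleton.elim _ _⟩⟩
  have hnt : Nontrivial (Euc n × Euc n) := not_subsingleton_iff_nontrivial.1 hs
  have hcn : Subsingleton (Euc n × Euc n) ∨ c < ‖((ContinuousLinearEquiv.refl ℝ (Euc n × Euc n)).symm : Euc n × Euc n →L[ℝ] Euc n × Euc n)‖₊⁻¹ := by
    right
    have : ‖((ContinuousLinearEquiv.refl ℝ (Euc n × Euc n)).symm : Euc n × Euc n →L[ℝ] Euc n × Euc n)‖₊ = 1 := by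
      ext; exact ContinuousLinearMap.norm_id
    rw [this, inv_one]
    refine NNReal.coe_lt_coe.1 ?_
    change (|t| + |s|) * C < 1
    linarith
  exact (happ.toHomeomorph _ hcn).bijective

theorem qF_real {n : ℕ} (g : Euc n → Euc n) (t s : ℝ) (p : Euc n × Euc n) :
    qF g t s p = ((‖(Fc g t s p).1‖ ^ 2 + ‖(Fc g t s p).2‖ ^ 2 : ℝ) : ℂ) := by
  have : ‖(Fc g t s p).1‖ ^ 2 + ‖(Fc g t s p).2‖ ^ 2 = (‖p.1‖ ^ 2 + ‖p.2‖ ^ 2) + t * (2 * (⟪p.1, g p.1⟫ + ⟪p.2, g p.2⟫)) +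
    s * (2 * (⟪p.2, g p.1⟫ - ⟪p.1, g p.2⟫)) + (t ^ 2 + s ^ 2) * (‖g p.1‖ ^ 2 + ‖g p.2‖ ^ 2) := by
    simp only [Fc, ← real_inner_self_eq_norm_sq, inner_add_left, inner_add_right, inner_sub_left, inner_sub_right,
      inner_smul_left, inner_smul_right, conj_trivial]
    rw [real_inner_comm (g p.1) p.1, real_inner_comm (g p.2) p.2, real_inner_comm (g p.1) p.2, real_inner_comm (g p.2) p.1,
      real_inner_comm (g p.1) (g p.2)]
    ring
  rw [this, qF]
  push_cast
  ring

theorem J_real {n : ℕ} {g : Euc n → Euc n} (hg : Differentiable ℝ g) {C : ℝ} (hC : 0 ≤ C)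
    (hA : ∀ x, ‖fderiv ℝ g x‖ ≤ C) :
    ∃ δ > 0, ∀ t s : ℝ, |t| < δ → |s| < δ → ∫ p, fJ g t s p = ((2 * Real.pi) ^ n : ℝ) := by
  obtain ⟨ε, hε, hdet⟩ := det_near_one (Euc n × Euc n)
  refine ⟨min ε (1/2) / (2 * (C + 1)), by positivity, fun t s ht hs => ?_⟩
  have hts : (|t| + |s|) * C < min ε (1/2) := by
    have : |t| + |s| < min ε (1/2) / (C + 1) := by
      have : min ε (1/2) / (2 * (C + 1)) + min ε (1/2) / (2 * (C + 1)) = min ε (1/2) / (C + 1) := by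
        field_simp; ring
      linarith
    rw [lt_div_iff₀ (by positivity)] at this
    nlinarith [abs_nonneg t, abs_nonneg s]
  have hbij := Fc_bij hg hC hA (hts.trans_le (min_le_right _ _))
  have hpos : ∀ p, 0 < (dFc g t s p).det := fun p =>
    hdet _ ((dFc_sub_norm hC hA t s p).trans_lt (hts.trans_le (min_le_left _ _)))
  have h1 := integral_image_eq_integral_abs_det_fderiv_smul volume MeasurableSet.univ
    (fun p _ => (Fc_hasFDerivAt hg t s p).hasFDerivWithinAt) hbij.1.injOn
    (fun p : Euc n × Euc n => Real.exp (-(1/2) * (‖p.1‖ ^ 2 + ‖p.2‖ ^ 2)))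
  rw [image_univ, hbij.2.range_eq, Measure.restrict_univ, gauss_prod] at h1
  rw [h1, ← integral_complex_ofReal]
  congr 1
  ext p
  rw [fJ, qF_real, dFc_det, abs_of_pos (hpos p), smul_eq_mul]
  push_cast
  ring

theorem J_const {n : ℕ} {g : Euc n → Euc n} (hg : Differentiable ℝ g) {C : ℝ} (hC : ∀ x, ‖g x‖ ≤ C)
    (hA : ∀ x, ‖fderiv ℝ g x‖ ≤ C) (t s : ℂ) :
    ∫ p, fJ g t s p = ((2 * Real.pi) ^ n : ℝ) := by
  have hC0 : 0 ≤ C := (norm_nonneg _).trans (hC 0)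
  obtain ⟨δ, hδ, h⟩ := J_real hg hC0 hA
  have hev : ∀ᶠ t : ℝ in nhds 0, |t| < δ := by
    have := Metric.ball_mem_nhds (0:ℝ) hδ
    filter_upwards [this] with t ht
    simpa using ht
  have hdt : ∀ s : ℂ, Differentiable ℂ (fun t => ∫ p, fJ g t s p) := by
    intro s
    refine entire_integral _ (fun z => (fJ_meas hg z s).aestronglyMeasurable) (fun p => fJ_diff_t g s p) fun R hR => ?_
    obtain ⟨B, hB, hb⟩ := fJ_bound hC hA (max R (‖s‖)) (by positivity)
    exact ⟨B, hB, fun z hz a => hb z s (hz.trans (le_max_left _ _)) (le_max_right _ _) a⟩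
  have hds : Differentiable ℂ (fun s => ∫ p, fJ g t s p) := by
    refine entire_integral _ (fun z => (fJ_meas hg t z).aestronglyMeasurable) (fun p => fJ_diff_s g t p) fun R hR => ?_
    obtain ⟨B, hB, hb⟩ := fJ_bound hC hA (max R (‖t‖)) (by positivity)
    exact ⟨B, hB, fun z hz a => hb t z (le_max_right _ _) (hz.trans (le_max_left _ _)) a⟩
  refine entire_const hds ?_ s
  filter_upwards [hev] with s hs
  refine entire_const (hdt s) ?_ t
  filter_upwards [hev] with t ht
  exact h t s ht hs

theorem bM_det_special {n : ℕ} (g : Euc n → Euc n) (p : Euc n × Euc n) :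
    (bM g (1/2) (Complex.I / 2) p).det =
      (((1 : Matrix (Fin n) (Fin n) ℝ) + (1/2 : ℝ) • (mA g p.1 + mA g p.2)).det : ℂ) := by
  have h1 : Matrix.fromBlocks (1 : Matrix (Fin n) (Fin n) ℂ) 0 (-(Complex.I • 1)) 1 * bM g (1/2) (Complex.I / 2) p *
      Matrix.fromBlocks (1 : Matrix (Fin n) (Fin n) ℂ) 0 (Complex.I • 1) 1 =
      Matrix.fromBlocks (1 + (1/2 : ℂ) • (mAC g p.1 + mAC g p.2)) (-((Complex.I / 2) • mAC g p.2)) 0 1 := by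
    have hI : Complex.I * (Complex.I / 2) = -(1/2) := by
      rw [← mul_div_assoc, Complex.I_mul_I]; ring
    rw [bM, Matrix.fromBlocks_multiply, Matrix.fromBlocks_multiply]
    congr 1
    · ext i j
      simp
      linear_combination (-(mAC g p.2 i j)) * hI
    · simp
    · ext i j
      simp
      linear_combination ((mAC g p.2 i j) * Complex.I) * hI
    · ext i j
      simp
      linear_combination ((mAC g p.2 i j)) * hI
  have h2 := congrArg Matrix.det h1
  rw [Matrix.det_mul, Matrix.det_mul, Matrix.det_fromBlocks_zero₁₂, Matrix.det_fromBlocks_zero₁₂,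
    Matrix.det_fromBlocks_zero₂₁] at h2
  simp only [Matrix.det_one, mul_one, one_mul] at h2
  rw [h2]
  change _ = Complex.ofRealHom _
  rw [RingHom.map_det]
  congr 1
  ext i j
  simp [mAC, Matrix.one_apply]
  split_ifs <;> simp

theorem BM_first {n : ℕ} {g : Euc n → Euc n} (hg : Differentiable ℝ g) {C : ℝ} (hC : ∀ x, ‖g x‖ ≤ C)
    (hA : ∀ x, ‖fderiv ℝ g x‖ ≤ C) :
    ENNReal.ofReal ((2 * Real.pi) ^ n) ≤ ∫⁻ p : Euc n × Euc n,
      ENNReal.ofReal |((1 : Matrix (Fin n) (Fin n) ℝ) + (1/2 : ℝ) • (mA g p.1 + mA g p.2)).det| *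
      ENNReal.ofReal (Real.exp (-(1/2) * (⟪p.1, p.1 + g p.1⟫ + ⟪p.2, p.2 + g p.2⟫))) := by
  have h1 := J_const hg hC hA (1/2) (Complex.I / 2)
  have h2 : ENNReal.ofReal ((2 * Real.pi) ^ n) = ‖∫ p, fJ g (1/2) (Complex.I / 2) p‖ₑ := by
    rw [h1, ← ofReal_norm_eq_enorm, Complex.norm_real, Real.norm_of_nonneg (by positivity)]
  rw [h2]
  refine (enorm_integral_le_lintegral_enorm _).trans (lintegral_mono fun p => le_of_eq ?_)
  rw [fJ, bM_det_special, enorm_mul, mul_comm, ← ofReal_norm_eq_enorm, ← ofReal_norm_eq_enorm, Complex.norm_real, Complex.norm_exp]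
  congr 3
  have hre : ∀ z : ℂ, (-(1 / 2) * z).re = -(1/2) * z.re := by
    intro z
    have : (-(1/2) : ℂ) = ((-(1/2) : ℝ) : ℂ) := by push_cast; rfl
    rw [this, Complex.re_ofReal_mul]
  rw [hre, qF]
  have h0 : ((1/2:ℂ)^2 + (Complex.I / 2)^2) = 0 := by rw [div_pow, div_pow, Complex.I_sq]; norm_num
  rw [h0, zero_mul, add_zero, Complex.add_re, Complex.add_re, Complex.ofReal_re, Complex.re_mul_ofReal, Complex.re_mul_ofReal]
  have h3 : (Complex.I / 2).re = 0 := by simp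
  have h4 : (1 / 2 : ℂ).re = 1 / 2 := by norm_num
  rw [h3, h4, inner_add_right, inner_add_right, real_inner_self_eq_norm_sq, real_inner_self_eq_norm_sq]
  ring

theorem BM_second {n : ℕ} {g : Euc n → Euc n} (hg : Differentiable ℝ g) {C : ℝ} (hC : ∀ x, ‖g x‖ ≤ C)
    (hA : ∀ x, ‖fderiv ℝ g x‖ ≤ C) (hmono : ∀ x z, 0 ≤ ⟪g x - g z, x - z⟫)
    (h₁ h₂ : Euc n → ℝ≥0∞) (hm₁ : Measurable h₁) (hm₂ : Measurable h₂)
    (hh : ∀ x x', ENNReal.ofReal (Real.exp (-(1/2) * (⟪x, x + g x⟫ + ⟪x', x' + g x'⟫))) ≤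
      h₁ (x + x') * h₂ ((x + g x) - (x' + g x'))) :
    ENNReal.ofReal ((2 * Real.pi) ^ n) ≤ (∫⁻ x, h₁ x) * ∫⁻ y, h₂ y := by
  let T : Euc n × Euc n → Euc n × Euc n := fun p => (p.1 + p.2, (p.1 + g p.1) - (p.2 + g p.2))
  let T' : Euc n × Euc n → (Euc n × Euc n →L[ℝ] Euc n × Euc n) := fun p =>
    (((1 : Euc n →L[ℝ] Euc n).comp (ContinuousLinearMap.fst ℝ _ _) + (1 : Euc n →L[ℝ] Euc n).comp (ContinuousLinearMap.snd ℝ _ _)).prod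
      ((1 + fderiv ℝ g p.1).comp (ContinuousLinearMap.fst ℝ _ _) + (-(1 + fderiv ℝ g p.2)).comp (ContinuousLinearMap.snd ℝ _ _)))
  have hT : ∀ p, HasFDerivAt T (T' p) p := by
    intro p
    have h1 : HasFDerivAt (fun p : Euc n × Euc n => g p.1) ((fderiv ℝ g p.1).comp (ContinuousLinearMap.fst ℝ _ _)) p :=
      (hg p.1).hasFDerivAt.comp p hasFDerivAt_fst
    have h2 : HasFDerivAt (fun p : Euc n × Euc n => g p.2) ((fderiv ℝ g p.2).comp (ContinuousLinearMap.snd ℝ _ _)) p :=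
      (hg p.2).hasFDerivAt.comp p hasFDerivAt_snd
    have h5 := ((hasFDerivAt_fst (𝕜 := ℝ) (p := p)).add hasFDerivAt_snd).prodMk
      (((hasFDerivAt_fst (𝕜 := ℝ) (p := p)).add h1).sub ((hasFDerivAt_snd (𝕜 := ℝ) (p := p)).add h2))
    refine HasFDerivAt.congr_fderiv h5 ?_
    refine ContinuousLinearMap.ext fun v => Prod.ext ?_ ?_
    · simp [T']
    · simp [T']; abel
  have hinj : Function.Injective T := by
    rintro ⟨x, x'⟩ ⟨z, z'⟩ h
    simp only [T, Prod.mk.injEq] at h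
    obtain ⟨e1, e2⟩ := h
    have e3 : x' - z' = -(x - z) := by
      have : x' = z + z' - x := by rw [← e1]; abel
      rw [this]; abel
    have e4 : (x - z) + (x - z) + (g x - g z) = g x' - g z' := by
      have : g x - g z = -(x - z) + (x' - z') + (g x' - g z') := by
        have h6 := sub_eq_zero.2 e2
        rw [← sub_eq_zero, ← h6]; abel
      rw [this, e3]; abel
    have m1 := hmono x z
    have m2 := hmono x' z'
    rw [← e4, e3, inner_neg_right, inner_add_left, inner_add_left, real_inner_self_eq_norm_sq] at m2
    have : ‖x - z‖ ^ 2 = 0 := le_antisymm (by linarith) (sq_nonneg _)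
    have h0 : x - z = 0 := by simpa using this
    rw [h0, neg_zero] at e3
    rw [sub_eq_zero.1 h0, sub_eq_zero.1 e3]
  have hdet : ∀ p, |((1 : Matrix (Fin n) (Fin n) ℝ) + (1/2 : ℝ) • (mA g p.1 + mA g p.2)).det| ≤ |(T' p).det| := by
    intro p
    have h1 : (T' p).det = (Matrix.fromBlocks (1 : Matrix (Fin n) (Fin n) ℝ) 1 (1 + mA g p.1) (-(1 + mA g p.2))).det := by
      simp only [T']
      rw [det_block]
      congr 1
      ext i j
      rcases i with i | i <;> rcases j with j | j <;> simp [mA, Matrix.one_apply, EuclideanSpace.single_apply]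
    have h2 : -(1 + mA g p.2) - (1 + mA g p.1) * 1 = (-2 : ℝ) • ((1 : Matrix (Fin n) (Fin n) ℝ) + (1/2 : ℝ) • (mA g p.1 + mA g p.2)) := by
      ext i j
      simp
      ring
    rw [h1, Matrix.det_fromBlocks_one₁₁, h2, Matrix.det_smul, abs_mul, abs_pow]
    refine le_mul_of_one_le_left (abs_nonneg _) (one_le_pow₀ ?_)
    norm_num
  calc ENNReal.ofReal ((2 * Real.pi) ^ n) ≤ _ := BM_first hg hC hA
    _ ≤ ∫⁻ p in univ, ENNReal.ofReal |(T' p).det| * (fun q : Euc n × Euc n => h₁ q.1 * h₂ q.2) (T p) := by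
      rw [Measure.restrict_univ]
      refine lintegral_mono fun p => ?_
      exact mul_le_mul' (ENNReal.ofReal_le_ofReal (hdet p)) (hh p.1 p.2)
    _ = ∫⁻ q in T '' univ, h₁ q.1 * h₂ q.2 :=
      (lintegral_image_eq_lintegral_abs_det_fderiv_mul volume MeasurableSet.univ
        (fun p _ => (hT p).hasFDerivWithinAt) hinj.injOn (fun q : Euc n × Euc n => h₁ q.1 * h₂ q.2)).symm
    _ ≤ ∫⁻ q : Euc n × Euc n, h₁ q.1 * h₂ q.2 := setLIntegral_le_lintegral _ _
    _ = _ := by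
      rw [Measure.volume_eq_prod, lintegral_prod_mul hm₁.aemeasurable hm₂.aemeasurable]

theorem polarSet_convex {d : ℕ} (S : Set (Euc d)) : Convex ℝ (polarSet S) := by
  intro y hy z hz a b ha hb hab x hx
  rw [inner_add_right, inner_smul_right, inner_smul_right]
  nlinarith [hy x hx, hz x hx]

theorem polarSet_symm {d : ℕ} {S : Set (Euc d)} (hs : ∀ v ∈ S, -v ∈ S) : ∀ v ∈ polarSet S, -v ∈ polarSet S := by
  intro y hy x hx
  have := hy (-x) (hs x hx)
  rwa [inner_neg_right, ← inner_neg_left]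

theorem polarSet_anti {d : ℕ} {S T : Set (Euc d)} (h : S ⊆ T) : polarSet T ⊆ polarSet S :=
  fun _ hy x hx => hy x (h hx)

theorem zero_mem_polarSet {d : ℕ} (S : Set (Euc d)) : (0 : Euc d) ∈ polarSet S := by
  intro x _; simp

theorem polarSet_smul {d : ℕ} (S : Set (Euc d)) {r : ℝ} (hr : 0 < r) : polarSet (r • S) = r⁻¹ • polarSet S := by
  ext y
  rw [mem_smul_set_iff_inv_smul_mem₀ (inv_ne_zero hr.ne'), inv_inv]
  constructor
  · intro h x hx
    have := h (r • x) (smul_mem_smul_set hx)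
    rwa [inner_smul_left, conj_trivial, ← inner_smul_right] at this
  · rintro h _ ⟨x, hx, rfl⟩
    have := h x hx
    simp only
    rwa [inner_smul_left, conj_trivial, ← inner_smul_right]

theorem polarSet_bounded {d : ℕ} {S : Set (Euc d)} {r : ℝ} (hr : 0 < r) (h : ball 0 r ⊆ S) :
    polarSet S ⊆ closedBall 0 (2 / r) := by
  intro y hy
  rw [mem_closedBall_zero_iff]
  by_cases hy0 : y = 0
  · rw [hy0, norm_zero]; positivity
  have hyn : 0 < ‖y‖ := norm_pos_iff.2 hy0
  have h1 : (r / 2 / ‖y‖) • y ∈ ball (0 : Euc d) r := by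
    rw [mem_ball_zero_iff, norm_smul, Real.norm_of_nonneg (by positivity)]
    field_simp; linarith
  have h2 := hy _ (h h1)
  rw [inner_smul_left, conj_trivial, real_inner_self_eq_norm_sq] at h2
  rw [le_div_iff₀ hr]
  have : r / 2 / ‖y‖ * ‖y‖ ^ 2 = ‖y‖ * r / 2 := by field_simp
  linarith

theorem polarSet_nhds {d : ℕ} {S : Set (Euc d)} (hb : Bornology.IsBounded S) : polarSet S ∈ nhds (0 : Euc d) := by
  obtain ⟨R, hR0, hR⟩ := hb.exists_pos_norm_le
  refine Filter.mem_of_superset (ball_mem_nhds 0 (inv_pos.2 hR0)) fun y hy x hx => ?_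
  rw [mem_ball_zero_iff] at hy
  calc ⟪x, y⟫ ≤ ‖x‖ * ‖y‖ := real_inner_le_norm _ _
    _ ≤ R * R⁻¹ := mul_le_mul (hR x hx) hy.le (norm_nonneg _) hR0.le
    _ = 1 := mul_inv_cancel₀ hR0.ne'

theorem polarSet_compact {d : ℕ} {S : Set (Euc d)} (h0 : S ∈ nhds (0 : Euc d)) : IsCompact (polarSet S) := by
  obtain ⟨r, hr, h⟩ := Metric.mem_nhds_iff.1 h0
  exact (isCompact_closedBall _ _).of_isClosed_subset (polarSet_isClosed S) (polarSet_bounded hr h)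

theorem bipolar {d : ℕ} {K : Set (Euc d)} (hK : IsClosed K) (hc : Convex ℝ K) (h0 : (0 : Euc d) ∈ K) :
    polarSet (polarSet K) ⊆ K := by
  intro x hx
  by_contra hxK
  obtain ⟨f, u, h1, h2⟩ := geometric_hahn_banach_closed_point hc hK hxK
  have hu : 0 < u := by simpa using h1 0 h0
  let w := (InnerProductSpace.toDual ℝ (Euc d)).symm f
  have hw : ∀ v, ⟪w, v⟫ = f v := fun v => InnerProductSpace.toDual_symm_apply
  have hmem : u⁻¹ • w ∈ polarSet K := by
    intro k hk
    rw [inner_smul_right, real_inner_comm, hw, inv_mul_le_iff₀ hu, mul_one]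
    exact (h1 k hk).le
  have := hx _ hmem
  rw [inner_smul_left, conj_trivial, hw, inv_mul_le_iff₀ hu, mul_one] at this
  linarith

theorem gauge_polar_le {d : ℕ} {S : Set (Euc d)} {Y : Euc d} {l : ℝ} (hl : 0 ≤ l)
    (h : ∀ s ∈ S, ⟪s, Y⟫ ≤ l) : gauge (polarSet S) Y ≤ l := by
  refine le_of_forall_pos_le_add fun ε hε => ?_
  have hp : 0 < l + ε := by linarith
  refine gauge_le_of_mem hp.le ?_
  rw [mem_smul_set_iff_inv_smul_mem₀ hp.ne']
  intro s hs
  rw [inner_smul_right, inv_mul_le_iff₀ hp]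
  linarith [h s hs]

theorem lapZ_neg {d : ℕ} {L : Set (Euc d)} (hL : IsCompact L) (hs : ∀ v ∈ L, -v ∈ L) (x : Euc d) :
    lapZ L (-x) = lapZ L x := by
  unfold lapZ
  rw [← integral_indicator hL.measurableSet, ← integral_indicator hL.measurableSet, ← integral_neg_eq_self]
  congr 1
  ext y
  have : -y ∈ L ↔ y ∈ L := ⟨fun h => by simpa using hs _ h, hs y⟩
  by_cases hy : y ∈ L
  · rw [indicator_of_mem hy, indicator_of_mem (this.2 hy)]; simp
  · rw [indicator_of_notMem hy, indicator_of_notMem (mt this.1 hy)]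

theorem lapZ_zero {d : ℕ} (L : Set (Euc d)) : lapZ L 0 = volume.real L := by
  simp [lapZ]

theorem lapZ_ge_zero {d : ℕ} {L : Set (Euc d)} (hL : IsCompact L) (hv : 0 < volume L) (hs : ∀ v ∈ L, -v ∈ L) (x : Euc d) :
    volume.real L ≤ lapZ L x := by
  have h1 := lapZ_convex hL hv 0 x
  have h2 := lapZ_convex hL hv 0 (-x)
  rw [lapZ_neg hL hs, sub_zero, inner_neg_left] at h2
  rw [sub_zero] at h1
  rw [← lapZ_zero]
  exact (Real.log_le_log_iff (lapZ_pos hL hv _) (lapZ_pos hL hv _)).1 (by linarith)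

theorem lapZ_lower {d : ℕ} {L : Set (Euc d)} (hL : IsCompact L) (hc : Convex ℝ L) (hv : 0 < volume L) (hs : ∀ v ∈ L, -v ∈ L)
    (x y₀ : Euc d) (hy : y₀ ∈ L) :
    (1/2) * ⟪x, y₀⟫ - d * Real.log 2 + Real.log (volume.real L) ≤ Real.log (lapZ L x) := by
  let f : Euc d → Euc d := fun v => (1/2 : ℝ) • (y₀ + v)
  have hf : ∀ v, HasFDerivAt f ((1/2 : ℝ) • ContinuousLinearMap.id ℝ (Euc d)) v := fun v =>
    ((hasFDerivAt_id v).const_add y₀).const_smul (1/2 : ℝ)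
  have hinj : Function.Injective f := by
    intro a b h
    have := smul_right_injective (Euc d) (by norm_num : (1/2 : ℝ) ≠ 0) h
    exact add_left_cancel this
  have hsub : f '' L ⊆ L := by
    rintro _ ⟨v, hv, rfl⟩
    have := hc hy hv (by norm_num : (0:ℝ) ≤ 1/2) (by norm_num : (0:ℝ) ≤ 1/2) (by norm_num)
    simpa [f, smul_add] using this
  have h1 := integral_image_eq_integral_abs_det_fderiv_smul volume hL.measurableSet
    (fun v _ => (hf v).hasFDerivWithinAt) hinj.injOn (fun y => Real.exp ⟪x, y⟫)
  have hdet : ((1/2 : ℝ) • ContinuousLinearMap.id ℝ (Euc d)).det = (1/2) ^ d := by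
    rw [ContinuousLinearMap.det]
    simp
  have h2 : ∫ y in f '' L, Real.exp ⟪x, y⟫ = (1/2) ^ d * Real.exp ((1/2) * ⟪x, y₀⟫) * lapZ L ((1/2 : ℝ) • x) := by
    rw [h1, lapZ, ← integral_const_mul]
    congr 1
    ext v
    rw [hdet, abs_of_pos (by positivity), smul_eq_mul, mul_assoc, ← Real.exp_add]
    congr 2
    simp only [f, inner_smul_right, inner_add_right, inner_smul_left, conj_trivial]
    ring
  have h3 : ∫ y in f '' L, Real.exp ⟪x, y⟫ ≤ lapZ L x :=
    setIntegral_mono_set (lap_integrable hL (by fun_prop))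
      (Filter.Eventually.of_forall fun y => (Real.exp_pos _).le) hsub.eventuallyLE
  have hvr : 0 < volume.real L := ENNReal.toReal_pos hv.ne' hL.measure_lt_top.ne
  have h4 : (1/2) ^ d * Real.exp ((1/2) * ⟪x, y₀⟫) * volume.real L ≤ lapZ L x := by
    refine le_trans ?_ (h2 ▸ h3)
    gcongr
    exact lapZ_ge_zero hL hv hs _
  have h5 := Real.log_le_log (by positivity) h4
  rw [Real.log_mul (by positivity) hvr.ne', Real.log_mul (by positivity) (by positivity), Real.log_exp, Real.log_pow,
    one_div, Real.log_inv] at h5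
  rw [one_div]
  linarith

theorem gauge_exp {d : ℕ} {S : Set (Euc d)} (hS : IsCompact S) (hc : Convex ℝ S) (hs : ∀ v ∈ S, -v ∈ S)
    (h0 : S ∈ nhds (0 : Euc d)) {c : ℝ} (hcp : 0 < c) :
    ∫⁻ x, ENNReal.ofReal (Real.exp (-c * gauge S x)) ≤ ENNReal.ofReal (d.factorial / c ^ d * volume.real S) := by
  have habs : Absorbent ℝ S := absorbent_nhds_zero h0
  have hcont := continuous_gauge hc h0
  have hbal : ∀ (r : ℝ) x, gauge S (r • x) = |r| * gauge S x := by
    intro r x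
    rcases le_total 0 r with h | h
    · rw [gauge_smul_of_nonneg h, smul_eq_mul, abs_of_nonneg h]
    · rw [← gauge_neg hs, ← neg_smul, gauge_smul_of_nonneg (neg_nonneg.2 h), smul_eq_mul, abs_of_nonpos h]
  have h1 := MeasureTheory.measure_lt_one_eq_integral_div_gamma (μ := (volume : Measure (Euc d)))
    (g := fun x => c * gauge S x) (p := 1) (by simp) (fun x => by rw [gauge_neg hs])
    (fun x y => by rw [← mul_add]; exact mul_le_mul_of_nonneg_left (gauge_add_le hc habs x y) hcp.le)
    (fun {x} h => by
      have : gauge S x = 0 := by simpa [hcp.ne'] using h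
      exact (gauge_eq_zero habs (NormedSpace.isVonNBounded_of_isBounded ℝ hS.isBounded)).1 this)
    (fun r x => by rw [hbal]; exact le_of_eq (by ring)) one_pos
  simp only [Real.rpow_one, div_one, finrank_euclideanSpace, Fintype.card_fin] at h1
  rw [Real.Gamma_nat_eq_factorial] at h1
  have hopen : IsOpen {x : Euc d | c * gauge S x < 1} := isOpen_lt (by fun_prop) continuous_const
  have hpos : 0 < volume {x : Euc d | c * gauge S x < 1} := hopen.measure_pos _ ⟨0, by simp⟩
  have hIntg : Integrable (fun x => Real.exp (-(c * gauge S x))) := by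
    by_contra h
    rw [h1, integral_undef h] at hpos
    simp at hpos
  have hsub : {x : Euc d | c * gauge S x < 1} ⊆ c⁻¹ • S := by
    intro x hx
    rw [mem_smul_set_iff_inv_smul_mem₀ (inv_ne_zero hcp.ne'), inv_inv]
    have : gauge S (c • x) < 1 := by rw [hbal, abs_of_pos hcp]; exact hx
    exact gauge_lt_one_subset_self hc (mem_of_mem_nhds h0) habs this
  have hvol : volume (c⁻¹ • S) = ENNReal.ofReal (c⁻¹ ^ d * volume.real S) := by
    rw [Measure.addHaar_smul, finrank_euclideanSpace, Fintype.card_fin, abs_of_pos (by positivity), ENNReal.ofReal_mul (by positivity),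
      measureReal_def, ENNReal.ofReal_toReal hS.measure_lt_top.ne]
  have h2 := measure_mono (μ := volume) hsub
  rw [h1, hvol, ENNReal.ofReal_le_ofReal_iff (by positivity), div_le_iff₀ (by positivity)] at h2
  simp only [neg_mul]
  rw [← ofReal_integral_eq_lintegral_ofReal hIntg (Filter.Eventually.of_forall fun x => (Real.exp_pos _).le)]
  apply ENNReal.ofReal_le_ofReal
  refine h2.trans (le_of_eq ?_)
  rw [inv_pow]; field_simp

theorem Gamma_half_lower (n : ℕ) : (n.factorial : ℝ) ≤ 2 ^ n * Real.Gamma (n / 2 + 1) ^ 2 := by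
  induction n using Nat.twoStepInduction with
  | zero => simp
  | one =>
    have : Real.Gamma (1 / 2 + 1) = 1 / 2 * √Real.pi := by
      rw [Real.Gamma_add_one (by norm_num), Real.Gamma_one_half_eq]
    simp only [Nat.factorial_one, Nat.cast_one, pow_one]
    rw [this, mul_pow, Real.sq_sqrt Real.pi_pos.le]
    nlinarith [Real.pi_gt_three]
  | more n ih _ =>
    have h1 : Real.Gamma (((n + 2 : ℕ) : ℝ) / 2 + 1) = (n / 2 + 1) * Real.Gamma (n / 2 + 1) := by
      rw [← Real.Gamma_add_one (by positivity)]
      congr 1; push_cast; ring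
    rw [h1, Nat.factorial_succ, Nat.factorial_succ]
    push_cast
    have : (2:ℝ) ^ (n + 2) * ((n / 2 + 1) * Real.Gamma (n / 2 + 1)) ^ 2 = (n + 2) ^ 2 * (2 ^ n * Real.Gamma (n / 2 + 1) ^ 2) := by
      rw [pow_add]; ring
    rw [this]
    have hn : (0:ℝ) ≤ n := Nat.cast_nonneg n
    calc ((n:ℝ) + 1 + 1) * ((n + 1) * n.factorial) = ((n + 2) * (n + 1)) * n.factorial := by ring
      _ ≤ (n + 2) ^ 2 * n.factorial := by gcongr; nlinarith
      _ ≤ _ := by gcongr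

theorem omega_sq_le {n : ℕ} (hn : 0 < n) : ωd n ^ 2 * n.factorial ≤ (2 * Real.pi) ^ n := by
  haveI : Nonempty (Fin n) := ⟨⟨0, hn⟩⟩
  have hG : 0 < Real.Gamma (n / 2 + 1) := Real.Gamma_pos_of_pos (by positivity)
  have h1 : ωd n = √Real.pi ^ n / Real.Gamma (n / 2 + 1) := by
    rw [ωd, EuclideanSpace.volume_ball]
    simp
    positivity
  rw [h1, div_pow, ← pow_mul, mul_comm n 2, pow_mul, Real.sq_sqrt Real.pi_pos.le, mul_pow, div_mul_eq_mul_div,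
    div_le_iff₀ (by positivity), mul_comm (2 ^ n : ℝ), mul_assoc]
  gcongr
  exact Gamma_half_lower n

theorem BM_scaled {n : ℕ} (hn : 0 < n) {K : Set (Euc n)} (hK : IsCompact K) (hc : Convex ℝ K)
    (hs : ∀ v ∈ K, -v ∈ K) (h0 : K ∈ nhds (0 : Euc n)) (hsmall : ∀ u ∈ K, 2 * n * ‖u‖ ^ 2 ≤ 1) :
    ωd n ^ 2 ≤ (8 * Real.exp 3) ^ n * (volume.real K * volume.real (polarSet K)) := by
  set L := polarSet K
  have hn0 : (0:ℝ) < n := by exact_mod_cast hn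
  have hL : IsCompact L := polarSet_compact h0
  have hLc : Convex ℝ L := polarSet_convex K
  have hLs := polarSet_symm hs
  have hL0 : L ∈ nhds (0 : Euc n) := polarSet_nhds hK.isBounded
  have hv : 0 < volume L := MeasureTheory.Measure.measure_pos_of_mem_nhds _ hL0
  set P := polarSet L
  have hP : IsCompact P := polarSet_compact hL0
  have hPc : Convex ℝ P := polarSet_convex L
  have hPs := polarSet_symm hLs
  have hP0 : P ∈ nhds (0 : Euc n) := polarSet_nhds hL.isBounded
  have hPK : P ⊆ K := bipolar hK.isClosed hc (mem_of_mem_nhds h0)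
  obtain ⟨R, hR0, hR⟩ := hL.isBounded.exists_pos_norm_le
  set g := lapM L
  have hgd : ∀ x, HasFDerivAt g (lapD L x) x := lapM_hasFDerivAt hL hv
  have hg : Differentiable ℝ g := fun x => (hgd x).differentiableAt
  have hC : ∀ x, ‖g x‖ ≤ max R (2 * R ^ 2) := fun x => (lapM_norm_le hL hv hR x).trans (le_max_left _ _)
  have hA : ∀ x, ‖fderiv ℝ g x‖ ≤ max R (2 * R ^ 2) := fun x => by
    rw [(hgd x).fderiv]; exact (lapD_norm_le hL hv hR hR0.le x).trans (le_max_right _ _)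
  have hmono : ∀ x z, 0 ≤ ⟪g x - g z, x - z⟫ := by
    intro x z
    have h1 := lapZ_convex hL hv x z
    have h2 := lapZ_convex hL hv z x
    have e1 : z - x = -(x - z) := by abel
    rw [e1, inner_neg_left] at h1
    rw [inner_sub_left, real_inner_comm, real_inner_comm (x - z) (g z)]
    change _ ≤ ⟪x - z, lapM L x⟫ - ⟪x - z, lapM L z⟫
    linarith
  have hvr : 0 < volume.real L := ENNReal.toReal_pos hv.ne' hL.measure_lt_top.ne
  have hZup : ∀ u ∈ K, Real.log (lapZ L ((2 * n : ℝ) • u)) ≤ Real.log (volume.real L) + 2 * n := by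
    intro u hu
    have h1 : lapZ L ((2 * n : ℝ) • u) ≤ volume.real L * Real.exp (2 * n) := by
      have : volume.real L * Real.exp (2 * n) = ∫ y in L, Real.exp (2 * (n:ℝ)) := by
        rw [setIntegral_const, smul_eq_mul]
      rw [this, lapZ]
      refine setIntegral_mono_on (lap_integrable hL (by fun_prop)) (lap_integrable hL (by fun_prop))
        hL.measurableSet fun y hy => Real.exp_le_exp.2 ?_
      rw [inner_smul_left, conj_trivial]
      have := hy u hu
      nlinarith
    have h2 := Real.log_le_log (lapZ_pos hL hv _) h1
    rwa [Real.log_mul hvr.ne' (Real.exp_ne_zero _), Real.log_exp] at h2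
  -- basic inequality
  have hbase : ∀ x z, Real.log (lapZ L x) + ⟪z, x + g x⟫ - (Real.log (lapZ L z) + ‖z‖ ^ 2 / 2) ≤ ⟪x, x + g x⟫ := by
    intro x z
    have h1 := lapZ_convex hL hv x z
    have h2 : 0 ≤ ‖x - z‖ ^ 2 := sq_nonneg _
    rw [norm_sub_sq_real] at h2
    rw [inner_sub_left] at h1
    change _ + (⟪z, g x⟫ - ⟪x, g x⟫) ≤ _ at h1
    rw [inner_add_right, inner_add_right, real_inner_self_eq_norm_sq, real_inner_comm x z]
    nlinarith [sq_nonneg ‖x‖]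
  have hmain : ∀ x x', (1/2) * gauge P (x + x') + 2 * n * gauge L ((x + g x) - (x' + g x')) ≤
      ⟪x, x + g x⟫ + ⟪x', x' + g x'⟫ + (2 * n * Real.log 2 + 6 * n) := by
    intro x x'
    set X := x + x'
    set Y := (x + g x) - (x' + g x')
    set M := ⟪x, x + g x⟫ + ⟪x', x' + g x'⟫ + (2 * n * Real.log 2 + 6 * n)
    have hu : ∀ y₀ ∈ L, ∀ u ∈ K, (1/2) * ⟪y₀, X⟫ + 2 * n * ⟪u, Y⟫ ≤ M := by
      intro y₀ hy₀ u hu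
      have b1 := hbase x ((2 * n : ℝ) • u)
      have b2 := hbase x' ((2 * n : ℝ) • (-u))
      have z1 := hZup u hu
      have z2 := hZup (-u) (hs u hu)
      have l1 := lapZ_lower hL hLc hv hLs x y₀ hy₀
      have l2 := lapZ_lower hL hLc hv hLs x' y₀ hy₀
      have n1 : ‖(2 * n : ℝ) • u‖ ^ 2 / 2 ≤ n := by
        rw [norm_smul, mul_pow, Real.norm_of_nonneg (by positivity)]
        nlinarith [hsmall u hu]
      have n2 : ‖(2 * n : ℝ) • (-u)‖ ^ 2 / 2 ≤ n := by
        rwa [smul_neg, norm_neg]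
      have e1 : ⟪(2 * n : ℝ) • u, x + g x⟫ + ⟪(2 * n : ℝ) • (-u), x' + g x'⟫ = 2 * n * ⟪u, Y⟫ := by
        simp only [Y, inner_smul_left, conj_trivial, inner_neg_left, inner_sub_right]; ring
      have e2 : ⟪y₀, X⟫ = ⟪x, y₀⟫ + ⟪x', y₀⟫ := by
        simp only [X]; rw [real_inner_comm, inner_add_left]
      rw [e2]
      simp only [M]
      linarith
    have g1 : ∀ u ∈ K, gauge P X ≤ 2 * (M - 2 * n * ⟪u, Y⟫) := by
      intro u hu'
      refine gauge_polar_le ?_ fun y₀ hy₀ => ?_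
      · have := hu 0 (zero_mem_polarSet K) u hu'
        rw [inner_zero_left] at this
        linarith
      · linarith [hu y₀ hy₀ u hu']
    have g2 : gauge L Y ≤ (2 * n : ℝ)⁻¹ * (M - (1/2) * gauge P X) := by
      refine gauge_polar_le ?_ fun u hu' => ?_
      · have := g1 0 (mem_of_mem_nhds h0)
        rw [inner_zero_left] at this
        have : 0 ≤ M - (1/2) * gauge P X := by linarith
        positivity
      · rw [le_inv_mul_iff₀ (by positivity)]
        linarith [g1 u hu']
    rw [le_inv_mul_iff₀ (by positivity)] at g2
    linarith
  set A : ℝ := Real.exp (n * (Real.log 2 + 3))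
  have hgP := continuous_gauge hPc hP0
  have hgL := continuous_gauge hLc hL0
  have hfin := BM_second hg hC hA hmono
    (fun X => ENNReal.ofReal A * ENNReal.ofReal (Real.exp (-(1/4) * gauge P X)))
    (fun Y => ENNReal.ofReal (Real.exp (-(n:ℝ) * gauge L Y)))
    (by have : Continuous fun X => Real.exp (-(1/4) * gauge P X) := by fun_prop
        exact (ENNReal.measurable_ofReal.comp this.measurable).const_mul _)
    (by have : Continuous fun X => Real.exp (-(n:ℝ) * gauge L X) := by fun_prop
        exact (ENNReal.measurable_ofReal.comp this.measurable))
    (by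
      intro x x'
      rw [← ENNReal.ofReal_mul (by positivity), ← ENNReal.ofReal_mul (by positivity)]
      apply ENNReal.ofReal_le_ofReal
      rw [← Real.exp_add, ← Real.exp_add]
      apply Real.exp_le_exp.2
      have := hmain x x'
      linarith)
  have hAeq : A = (2 * Real.exp 3) ^ n := by
    simp only [A]; rw [Real.exp_nat_mul, Real.exp_add, Real.exp_log (by norm_num)]
  rw [lintegral_const_mul' _ _ ENNReal.ofReal_ne_top] at hfin
  have i1 := gauge_exp hP hPc hPs hP0 (c := 1/4) (by norm_num)
  have i2 := gauge_exp hL hLc hLs hL0 (c := n) hn0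
  have hfin2 := hfin.trans (mul_le_mul' (mul_le_mul' le_rfl i1) i2)
  rw [← ENNReal.ofReal_mul (by positivity), ← ENNReal.ofReal_mul (by positivity),
    ENNReal.ofReal_le_ofReal_iff (by positivity), hAeq] at hfin2
  have hPKv : volume.real P ≤ volume.real K := measureReal_mono hPK hK.measure_lt_top.ne
  have hfac : (n.factorial : ℝ) ≤ n ^ n := by exact_mod_cast Nat.factorial_le_pow n
  have hfp : (0:ℝ) < n.factorial := by exact_mod_cast n.factorial_pos
  have hom := omega_sq_le hn
  have hq : (n.factorial : ℝ) / n ^ n ≤ 1 := (div_le_one (by positivity)).2 hfac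
  have h4 : ωd n ^ 2 * n.factorial ≤ ((8 * Real.exp 3) ^ n * (volume.real K * volume.real L)) * n.factorial := by
    calc ωd n ^ 2 * n.factorial ≤ _ := hom
      _ ≤ _ := hfin2
      _ ≤ (2 * Real.exp 3) ^ n * (n.factorial / (1/4) ^ n * volume.real K) * (1 * volume.real L) := by gcongr
      _ = _ := by
        rw [one_div, inv_pow, div_inv_eq_mul, show (8:ℝ) = 2 * 4 by norm_num, mul_pow, mul_pow, mul_pow]; ring
  exact le_of_mul_le_mul_right h4 hfp

/-- A weak form of the Bourgain–Milman inequality. -/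
theorem bourgain_milman {n : ℕ} (hn : 0 < n) {K : Set (Euc n)} (hK : IsCompact K) (hc : Convex ℝ K)
    (hs : ∀ v ∈ K, -v ∈ K) (h0 : K ∈ nhds (0 : Euc n)) :
    ωd n ^ 2 ≤ (8 * Real.exp 3) ^ n * (volume.real K * volume.real (polarSet K)) := by
  obtain ⟨R, hR0, hR⟩ := hK.isBounded.exists_pos_norm_le
  have hn0 : (1:ℝ) ≤ n := by exact_mod_cast hn
  set r : ℝ := (2 * n * R)⁻¹
  have hr : 0 < r := by positivity
  have h1 := BM_scaled hn (K := r • K) (hK.smul r) (hc.smul r)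
    (by rintro _ ⟨v, hv, rfl⟩; exact ⟨-v, hs v hv, by simp⟩)
    (by simpa using smul_mem_nhds_smul₀ hr.ne' h0)
    (by
      rintro _ ⟨v, hv, rfl⟩
      simp only
      rw [norm_smul, Real.norm_of_nonneg hr.le]
      have h2 : r * ‖v‖ ≤ (2 * n : ℝ)⁻¹ := by
        calc r * ‖v‖ ≤ r * R := by gcongr; exact hR v hv
          _ = _ := by simp only [r]; field_simp
      calc 2 * n * (r * ‖v‖) ^ 2 ≤ 2 * n * ((2 * n : ℝ)⁻¹) ^ 2 := by gcongr
        _ = (2 * n : ℝ)⁻¹ := by field_simp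
        _ ≤ 1 := inv_le_one_of_one_le₀ (by linarith))
  rw [polarSet_smul K hr] at h1
  clear_value r
  have e : volume.real (r • K) * volume.real (r⁻¹ • polarSet K) = volume.real K * volume.real (polarSet K) := by
    simp only [measureReal_def]
    rw [Measure.addHaar_smul, Measure.addHaar_smul, ENNReal.toReal_mul, ENNReal.toReal_mul, finrank_euclideanSpace, Fintype.card_fin,
      ENNReal.toReal_ofReal (abs_nonneg _), ENNReal.toReal_ofReal (abs_nonneg _), abs_of_pos (by positivity), abs_of_pos (by positivity),
      inv_pow]
    field_simp
  rwa [e] at h1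

/-- The gauge of `K - x`. -/
def hp {d : ℕ} (K : Set (Euc d)) (x v : Euc d) : ℝ := gauge ((fun k => k - x) '' K) v

section
variable {d : ℕ} {K : Set (Euc d)}

theorem shift_nhds {x : Euc d} (hx : x ∈ interior K) : ((fun k => k - x) '' K) ∈ nhds (0 : Euc d) := by
  have : (fun k => k - x) '' K = (fun v => v + x) ⁻¹' K := by
    ext v; simp [sub_eq_iff_eq_add]
  rw [this]
  apply (continuous_id.add continuous_const).continuousAt.preimage_mem_nhds
  simpa using mem_interior_iff_mem_nhds.1 hx

theorem shift_convex (hK : IsConvexBody K) (x : Euc d) : Convex ℝ ((fun k => k - x) '' K) := by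
  have := hK.2.1.translate (-x)
  have e : (fun k => k - x) '' K = (fun y => -x + y) '' K := by
    apply image_congr; intro k _; simp [sub_eq_neg_add]
  rw [e]; exact this

theorem shift_compact (hK : IsConvexBody K) (x : Euc d) : IsCompact ((fun k => k - x) '' K) :=
  hK.1.image (continuous_id.sub continuous_const)

theorem hp_nonneg (x v : Euc d) : 0 ≤ hp K x v := gauge_nonneg _

theorem hp_zero (x : Euc d) : hp K x 0 = 0 := gauge_zero

theorem hp_add_le (hK : IsConvexBody K) {x : Euc d} (hx : x ∈ interior K) (v w : Euc d) :
    hp K x (v + w) ≤ hp K x v + hp K x w :=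
  gauge_add_le (shift_convex hK x) (absorbent_nhds_zero (shift_nhds hx)) v w

theorem hp_smul (x v : Euc d) {t : ℝ} (ht : 0 ≤ t) : hp K x (t • v) = t * hp K x v :=
  gauge_smul_of_nonneg ht v

theorem hp_le_one (hK : IsConvexBody K) {x : Euc d} (hx : x ∈ interior K) (v : Euc d) :
    hp K x v ≤ 1 ↔ x + v ∈ K := by
  rw [hp, gauge_le_one_iff_mem_closure (shift_convex hK x) (shift_nhds hx),
    (shift_compact hK x).isClosed.closure_eq]
  simp [sub_eq_iff_eq_add, add_comm]

theorem hp_continuous (hK : IsConvexBody K) {x : Euc d} (hx : x ∈ interior K) : Continuous (hp K x) :=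
  continuous_gauge (shift_convex hK x) (shift_nhds hx)

theorem hp_lt_one_iff (hK : IsConvexBody K) {x v : Euc d} (hx : x ∈ interior K) :
    hp K x v < 1 ↔ x + v ∈ interior K := by
  rw [hp, gauge_lt_one_iff_mem_interior (shift_convex hK x) (shift_nhds hx)]
  have : (fun k => k - x) '' K = (Homeomorph.addLeft x) ⁻¹' K := by
    ext v; simp [sub_eq_iff_eq_add, add_comm]
  rw [this, ← Homeomorph.preimage_interior]
  rfl

theorem hp_lt_one (hK : IsConvexBody K) {x y : Euc d} (hx : x ∈ interior K) (hy : y ∈ interior K) :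
    hp K x (y - x) < 1 := by
  rw [hp_lt_one_iff hK hx]; simpa using hy

theorem hp_change (hK : IsConvexBody K) {x y : Euc d} (hx : x ∈ interior K) (hy : y ∈ interior K)
    {l : ℝ} (hl : 0 < l) (h : hp K x (y - x) ≤ 1 - l) (v : Euc d) :
    hp K y v ≤ l⁻¹ * hp K x v := by
  rw [← div_eq_inv_mul, le_div_iff₀ hl]
  apply le_of_forall_gt_imp_ge_of_dense
  intro t ht
  have ht0 : 0 < t := (hp_nonneg x v).trans_lt ht
  have h1 : hp K x (y - x + (l / t) • v) ≤ 1 := by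
    refine (hp_add_le hK hx _ _).trans ?_
    rw [hp_smul _ _ (by positivity)]
    have : l / t * hp K x v ≤ l / t * t := by gcongr
    rw [div_mul_cancel₀ _ ht0.ne'] at this
    linarith
  rw [hp_le_one hK hx, ← add_assoc, add_sub_cancel, ← hp_le_one hK hy, hp_smul _ _ (by positivity),
    div_mul_eq_mul_div, div_le_one ht0] at h1
  linarith

theorem hp_triangle (hK : IsConvexBody K) {x y z : Euc d} (hx : x ∈ interior K) (hy : y ∈ interior K)
    (hz : z ∈ interior K) :
    (1 - hp K x (y - x)) * (1 - hp K y (z - y)) ≤ 1 - hp K x (z - x) := by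
  have hxy := hp_lt_one hK hx hy
  have hxz := hp_lt_one hK hx hz
  set l := 1 - hp K x (y - x) with hl
  have hl0 : 0 < l := by linarith
  suffices h : (hp K x (z - x) - 1 + l) / l ≤ hp K y (z - y) by
    rw [div_le_iff₀ hl0] at h; linarith
  apply le_of_forall_gt_imp_ge_of_dense
  intro t ht
  have ht0 : 0 < t := (hp_nonneg y _).trans_lt ht
  rw [div_le_iff₀ hl0]
  rcases le_total t 1 with h1 | h1
  · have h2 : hp K y (t⁻¹ • (z - y)) ≤ 1 := by
      rw [hp_smul _ _ (by positivity), inv_mul_le_iff₀ ht0]; linarith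
    rw [hp_le_one hK hy] at h2
    have h3 : hp K x (y + t⁻¹ • (z - y) - x) ≤ 1 := by
      rw [hp_le_one hK hx]; simpa using h2
    have e : z - x = (1 - t) • (y - x) + t • (y + t⁻¹ • (z - y) - x) := by
      rw [smul_sub t, smul_add t, smul_smul, mul_inv_cancel₀ ht0.ne']; module
    have h4 := hp_add_le hK hx ((1 - t) • (y - x)) (t • (y + t⁻¹ • (z - y) - x))
    rw [← e, hp_smul _ _ (by linarith), hp_smul _ _ ht0.le] at h4
    nlinarith
  · nlinarith

theorem finslerBall_eq (x : Euc d) : finslerBall K x = {v | hp K x v + hp K x (-v) ≤ 2} := rfl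

theorem finslerBall_symm (x : Euc d) : ∀ v ∈ finslerBall K x, -v ∈ finslerBall K x := by
  intro v hv
  rw [finslerBall_eq] at *
  simp only [mem_setOf_eq, neg_neg] at *
  linarith

theorem finslerBall_convex (hK : IsConvexBody K) {x : Euc d} (hx : x ∈ interior K) :
    Convex ℝ (finslerBall K x) := by
  intro v hv w hw a b ha hb hab
  rw [finslerBall_eq] at *
  simp only [mem_setOf_eq] at *
  have h1 := hp_add_le hK hx (a • v) (b • w)
  have h2 := hp_add_le hK hx (a • (-v)) (b • (-w))
  rw [hp_smul _ _ ha, hp_smul _ _ hb] at h1 h2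
  have e : -(a • v + b • w) = a • (-v) + b • (-w) := by simp; abel
  rw [e]
  nlinarith

theorem finslerBall_isClosed (hK : IsConvexBody K) {x : Euc d} (hx : x ∈ interior K) :
    IsClosed (finslerBall K x) := by
  rw [finslerBall_eq]
  have := hp_continuous hK hx
  exact isClosed_le (by fun_prop) continuous_const

theorem finslerBall_nhds (hK : IsConvexBody K) {x : Euc d} (hx : x ∈ interior K) :
    finslerBall K x ∈ nhds (0 : Euc d) := by
  rw [finslerBall_eq]
  have := hp_continuous hK hx
  have h2 : IsOpen {v | hp K x v + hp K x (-v) < 2} := isOpen_lt (by fun_prop) continuous_const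
  exact Filter.mem_of_superset (h2.mem_nhds (by simp [hp_zero])) (fun v hv => by simp only [mem_setOf_eq] at *; exact hv.le)

theorem finslerBall_compact (hK : IsConvexBody K) {x : Euc d} (hx : x ∈ interior K) :
    IsCompact (finslerBall K x) := by
  refine Metric.isCompact_of_isClosed_isBounded (finslerBall_isClosed hK hx) ?_
  refine ((shift_compact hK x).isBounded.smul₀ (2:ℝ)).subset ?_
  intro v hv
  rw [finslerBall_eq] at hv
  simp only [mem_setOf_eq] at hv
  have h1 : hp K x v ≤ 2 := by have := hp_nonneg (K := K) x (-v); linarith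
  have h2 : hp K x ((1/2:ℝ) • v) ≤ 1 := by rw [hp_smul _ _ (by norm_num)]; linarith
  rw [hp_le_one hK hx] at h2
  exact ⟨(1/2:ℝ) • v, ⟨_, h2, by simp⟩, by simp [smul_smul]⟩

/-- The density. -/
def fden (K : Set (Euc d)) (x : Euc d) : ℝ := (volume (polarSet (finslerBall K x))).toReal

theorem fden_nonneg (x : Euc d) : 0 ≤ fden K x := ENNReal.toReal_nonneg

theorem fden_change (hK : IsConvexBody K) {x y : Euc d} (hx : x ∈ interior K) (hy : y ∈ interior K)
    {l : ℝ} (hl : 0 < l) (h : hp K x (y - x) ≤ 1 - l) :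
    fden K y ≤ (l⁻¹) ^ d * fden K x := by
  have h1 : l • finslerBall K x ⊆ finslerBall K y := by
    rintro _ ⟨v, hv, rfl⟩
    rw [finslerBall_eq] at *
    simp only [mem_setOf_eq] at *
    rw [← smul_neg, hp_smul _ _ hl.le, hp_smul _ _ hl.le]
    have a := hp_change hK hx hy hl h v
    have b := hp_change hK hx hy hl h (-v)
    rw [← div_eq_inv_mul, le_div_iff₀ hl] at a b
    linarith
  have h2 := polarSet_anti h1
  rw [polarSet_smul _ hl] at h2
  have h3 := measure_mono (μ := volume) h2
  rw [Measure.addHaar_smul, finrank_euclideanSpace, Fintype.card_fin] at h3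
  have hfin : volume (polarSet (finslerBall K x)) ≠ ⊤ :=
    (polarSet_compact (finslerBall_nhds hK hx)).measure_lt_top.ne
  have h4 := ENNReal.toReal_mono (ENNReal.mul_ne_top ENNReal.ofReal_ne_top hfin) h3
  rwa [ENNReal.toReal_mul, ENNReal.toReal_ofReal (abs_nonneg _), abs_of_pos (by positivity)] at h4

theorem hilbertDist_eq (x y : Euc d) :
    hilbertDist K x y = -(1/2) * Real.log ((1 - hp K x (y - x)) * (1 - hp K y (x - y))) := rfl

theorem hilbertDist_comm (x y : Euc d) : hilbertDist K x y = hilbertDist K y x := by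
  rw [hilbertDist_eq, hilbertDist_eq, mul_comm (1 - hp K x _)]

theorem hilbertDist_le_iff (hK : IsConvexBody K) {x y : Euc d} (hx : x ∈ interior K) (hy : y ∈ interior K)
    {r : ℝ} : hilbertDist K x y ≤ r ↔
      Real.exp (-(2 * r)) ≤ (1 - hp K x (y - x)) * (1 - hp K y (x - y)) := by
  have h1 := hp_lt_one hK hx hy
  have h2 := hp_lt_one hK hy hx
  rw [← Real.le_log_iff_exp_le (mul_pos (by linarith) (by linarith)), hilbertDist_eq]
  constructor <;> intro h <;> linarith

theorem hilbertDist_nonneg (hK : IsConvexBody K) {x y : Euc d} (hx : x ∈ interior K) (hy : y ∈ interior K) :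
    0 ≤ hilbertDist K x y := by
  have h1 := hp_lt_one hK hx hy
  have h2 := hp_lt_one hK hy hx
  have h3 := hp_nonneg (K := K) x (y - x)
  have h4 := hp_nonneg (K := K) y (x - y)
  rw [hilbertDist_eq]
  have := Real.log_nonpos (mul_nonneg (by linarith : 0 ≤ 1 - hp K x (y - x)) (by linarith : 0 ≤ 1 - hp K y (x - y)))
    (by nlinarith)
  linarith

theorem hilbertDist_triangle (hK : IsConvexBody K) {x y z : Euc d} (hx : x ∈ interior K)
    (hy : y ∈ interior K) (hz : z ∈ interior K) :
    hilbertDist K x z ≤ hilbertDist K x y + hilbertDist K y z := by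
  have a1 := hp_lt_one hK hx hy
  have a2 := hp_lt_one hK hy hx
  have a3 := hp_lt_one hK hy hz
  have a4 := hp_lt_one hK hz hy
  have a5 := hp_lt_one hK hx hz
  have a6 := hp_lt_one hK hz hx
  have t1 := hp_triangle hK hx hy hz
  have t2 := hp_triangle hK hz hy hx
  have p1 : 0 < (1 - hp K x (y - x)) * (1 - hp K y (x - y)) := mul_pos (by linarith) (by linarith)
  have p2 : 0 < (1 - hp K y (z - y)) * (1 - hp K z (y - z)) := mul_pos (by linarith) (by linarith)
  have key : ((1 - hp K x (y - x)) * (1 - hp K y (x - y))) * ((1 - hp K y (z - y)) * (1 - hp K z (y - z)))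
      ≤ (1 - hp K x (z - x)) * (1 - hp K z (x - z)) := by
    calc _ = ((1 - hp K x (y - x)) * (1 - hp K y (z - y))) * ((1 - hp K z (y - z)) * (1 - hp K y (x - y))) := by ring
      _ ≤ _ := mul_le_mul t1 t2 (mul_nonneg (by linarith) (by linarith)) (by linarith)
  have := Real.log_le_log (mul_pos p1 p2) key
  rw [Real.log_mul p1.ne' p2.ne'] at this
  rw [hilbertDist_eq, hilbertDist_eq, hilbertDist_eq]
  linarith

/-- consequences of lying in a Hilbert ball -/
theorem ball_factor (hK : IsConvexBody K) {x y : Euc d} (hx : x ∈ interior K) (hy : y ∈ interior K)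
    {r : ℝ} (h : hilbertDist K x y ≤ r) : hp K x (y - x) ≤ 1 - Real.exp (-(2 * r)) := by
  rw [hilbertDist_le_iff hK hx hy] at h
  have h1 := hp_lt_one hK hx hy
  have h4 := hp_nonneg (K := K) y (x - y)
  nlinarith

theorem fden_ball (hK : IsConvexBody K) {x y : Euc d} (hx : x ∈ interior K) (hy : y ∈ interior K)
    {r : ℝ} (h : hilbertDist K x y ≤ r) : fden K y ≤ Real.exp (2 * r) ^ d * fden K x := by
  have := fden_change hK hx hy (Real.exp_pos _) (ball_factor hK hx hy h)
  rwa [← Real.exp_neg, neg_neg] at this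

theorem ball_subset (hK : IsConvexBody K) {x y : Euc d} (hx : x ∈ interior K) (hy : y ∈ interior K)
    {a : ℝ} (ha : 0 < a) (ha1 : a ≤ 1) (h : hilbertDist K x y ≤ a) :
    y - x ∈ (10 * a) • finslerBall K x := by
  have e0 : 1 - 2 * a ≤ Real.exp (-(2 * a)) := by
    have := Real.add_one_le_exp (-(2 * a)); linarith
  have h1 := ball_factor hK hx hy h
  have h2 := ball_factor hK hy hx (by rwa [hilbertDist_comm] : hilbertDist K y x ≤ a)
  have h3 := hp_change hK hy hx (Real.exp_pos _) h2 (x - y)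
  rw [← Real.exp_neg, neg_neg] at h3
  have e2 : Real.exp (2 * a) ≤ 8 := by
    have : Real.exp (2 * a) ≤ Real.exp (1 + 1) := Real.exp_le_exp.2 (by linarith)
    rw [Real.exp_add] at this
    have := Real.exp_one_lt_d9
    have := Real.exp_pos 1
    nlinarith
  have h4 : hp K x (x - y) ≤ 16 * a := by
    have := hp_nonneg (K := K) y (x - y)
    nlinarith
  refine (mem_smul_set_iff_inv_smul_mem₀ (by positivity) _ _).2 ?_
  rw [finslerBall_eq]
  simp only [mem_setOf_eq]
  rw [← smul_neg, neg_sub, hp_smul _ _ (by positivity), hp_smul _ _ (by positivity), ← mul_add,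
    inv_mul_le_iff₀ (by positivity)]
  linarith

theorem small_finsler (hK : IsConvexBody K) {x v : Euc d} (hx : x ∈ interior K)
    {a : ℝ} (ha : 0 < a) (ha1 : a ≤ 1) (hv : v ∈ (a / 8) • finslerBall K x) :
    x + v ∈ interior K ∧ hp K (x + v) (x - (x + v)) ≤ 1 - 2/3 ∧ hilbertDist K x (x + v) ≤ a / 2 := by
  obtain ⟨w, hw, rfl⟩ := hv
  rw [finslerBall_eq] at hw
  simp only [mem_setOf_eq] at *
  have n1 := hp_nonneg (K := K) x w
  have n2 := hp_nonneg (K := K) x (-w)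
  have p1 : hp K x ((a / 8) • w) = a / 8 * hp K x w := hp_smul _ _ (by positivity)
  have p2 : hp K x (-((a / 8) • w)) = a / 8 * hp K x (-w) := by
    rw [← smul_neg]; exact hp_smul _ _ (by positivity)
  have q1 : hp K x ((a / 8) • w) + hp K x (-((a / 8) • w)) ≤ a / 4 := by
    rw [p1, p2]; nlinarith
  generalize hvv : (a / 8) • w = v at *
  have m1 := hp_nonneg (K := K) x v
  have m2 := hp_nonneg (K := K) x (-v)
  have hy : x + v ∈ interior K := by rw [← hp_lt_one_iff hK hx]; linarith
  have h1 := hp_change hK hx hy (l := 1 - hp K x v) (by linarith) (by simp) (-v)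
  have hl : 0 < 1 - hp K x v := by linarith
  rw [← div_eq_inv_mul, le_div_iff₀ hl] at h1
  have m3 := hp_nonneg (K := K) (x + v) (-v)
  have e : x - (x + v) = -v := by abel
  refine ⟨hy, ?_, ?_⟩
  · rw [e]; nlinarith
  · rw [hilbertDist_le_iff hK hx hy, e, add_sub_cancel_left]
    have h2 : Real.exp (-(2 * (a / 2))) ≤ 1 - a / 4 := by
      rw [Real.exp_neg]
      have := Real.add_one_le_exp (2 * (a / 2))
      rw [inv_le_iff_one_le_mul₀ (Real.exp_pos _)]
      nlinarith
    nlinarith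
end

section
variable {d : ℕ} {K : Set (Euc d)}

theorem fden_usc (hK : IsConvexBody K) {x : Euc d} (hx : x ∈ interior K) {c : ℝ} (hc : fden K x < c) :
    ∀ᶠ y in nhds x, y ∈ interior K ∧ fden K y < c := by
  have hcont := hp_continuous hK hx
  have h1 : ContinuousAt (fun y => ((1 - hp K x (y - x))⁻¹) ^ d * fden K x) x := by
    apply ContinuousAt.mul _ continuousAt_const
    apply ContinuousAt.pow
    apply ContinuousAt.inv₀
    · exact Continuous.continuousAt (by fun_prop)
    · simp [hp_zero]
  have h2 : ∀ᶠ y in nhds x, ((1 - hp K x (y - x))⁻¹) ^ d * fden K x < c := by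
    apply h1.eventually_lt_const
    simpa [hp_zero] using hc
  filter_upwards [h2, isOpen_interior.mem_nhds hx] with y hy hyK
  have h3 := hp_lt_one hK hx hyK
  exact ⟨hyK, (fden_change hK hx hyK (by linarith) (by linarith)).trans_lt hy⟩

theorem fden_open (hK : IsConvexBody K) (c : ℝ) : IsOpen {y | y ∈ interior K ∧ fden K y < c} := by
  rw [isOpen_iff_mem_nhds]
  rintro x ⟨hx, hc⟩
  exact fden_usc hK hx hc

theorem fden_meas (hK : IsConvexBody K) : Measurable ((interior K).indicator (fden K)) := by
  apply measurable_of_Iio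
  intro c
  rcases le_or_gt c 0 with h | h
  · convert MeasurableSet.empty
    rw [eq_empty_iff_forall_notMem]
    intro y hy
    have : 0 ≤ (interior K).indicator (fden K) y := indicator_nonneg (fun y _ => fden_nonneg y) y
    simp only [mem_preimage, mem_Iio] at hy
    linarith
  · have e : (interior K).indicator (fden K) ⁻¹' Iio c = {y | y ∈ interior K ∧ fden K y < c} ∪ (interior K)ᶜ := by
      ext y
      by_cases hy : y ∈ interior K <;> simp [hy, h]
    rw [e]
    exact (fden_open hK c).measurableSet.union isOpen_interior.measurableSet.compl

theorem fden_integrableOn (hK : IsConvexBody K) (c : ℝ) :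
    IntegrableOn (fden K) {y | y ∈ interior K ∧ fden K y < c} volume := by
  have hm := (fden_open hK c).measurableSet
  have hfin : volume {y | y ∈ interior K ∧ fden K y < c} ≠ ⊤ :=
    ((measure_mono (fun y hy => interior_subset hy.1)).trans_lt hK.1.measure_lt_top).ne
  have h1 : IntegrableOn ((interior K).indicator (fden K)) {y | y ∈ interior K ∧ fden K y < c} volume := by
    refine Measure.integrableOn_of_bounded (M := c) hfin (fden_meas hK).aestronglyMeasurable ?_
    refine (ae_restrict_iff' hm).2 (Filter.Eventually.of_forall ?_)
    rintro y ⟨hy, hc⟩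
    rw [indicator_of_mem hy, Real.norm_of_nonneg (fden_nonneg y)]
    exact hc.le
  refine h1.congr_fun ?_ hm
  rintro y ⟨hy, _⟩
  exact indicator_of_mem hy _

theorem vol_shift (x : Euc d) {r : ℝ} (hr : 0 < r) (F : Set (Euc d)) :
    volume.real ((fun y => y - x) ⁻¹' (r • F)) = r ^ d * volume.real F := by
  rw [measureReal_def, vol_preimage_sub, Measure.addHaar_smul, finrank_euclideanSpace, Fintype.card_fin,
    ENNReal.toReal_mul, ENNReal.toReal_ofReal (abs_nonneg _), abs_of_pos (by positivity)]
  rfl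

theorem shiftF_compact (hK : IsConvexBody K) {x : Euc d} (hx : x ∈ interior K) (r : ℝ) :
    IsCompact ((fun y => y - x) ⁻¹' (r • finslerBall K x)) :=
  (Homeomorph.subRight x).isCompact_preimage.2 ((finslerBall_compact hK hx).smul r)

theorem ωd_pos (d : ℕ) : 0 < ωd d :=
  ENNReal.toReal_pos (measure_ball_pos _ _ one_pos).ne' measure_ball_lt_top.ne

theorem santalo_F (hd : 0 < d) (hK : IsConvexBody K) {x : Euc d} (hx : x ∈ interior K) :
    volume.real (finslerBall K x) * fden K x ≤ (8 * Real.exp 4) ^ d * ωd d ^ 2 := by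
  have := weak_santalo hd (finslerBall_compact hK hx) (finslerBall_convex hK hx) (finslerBall_symm x)
    (Measure.measure_pos_of_mem_nhds _ (finslerBall_nhds hK hx))
  have h2 := ENNReal.toReal_mono ENNReal.ofReal_ne_top this
  rwa [ENNReal.toReal_mul, ENNReal.toReal_ofReal (by positivity)] at h2

theorem bm_F (hd : 0 < d) (hK : IsConvexBody K) {x : Euc d} (hx : x ∈ interior K) :
    ωd d ^ 2 ≤ (8 * Real.exp 3) ^ d * (volume.real (finslerBall K x) * fden K x) :=
  bourgain_milman hd (finslerBall_compact hK hx) (finslerBall_convex hK hx) (finslerBall_symm x)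
    (finslerBall_nhds hK hx)

theorem lower_bound (hd : 0 < d) (hK : IsConvexBody K) {G : Set (Euc d)} (hGm : MeasurableSet G) {a : ℝ}
    (ha : 0 < a) (ha1 : a ≤ 1) {m : ℕ} (x : Fin m → Euc d) (hx : ∀ i, x i ∈ interior K)
    (hcov : G ⊆ ⋃ i, hilbertBall K (x i) a) :
    ∫ y in G, fden K y ≤ m * ((96 * Real.exp 6 * a) ^ d * ωd d ^ 2) := by
  set V : Fin m → Set (Euc d) := fun i => (fun y => y - x i) ⁻¹' ((10 * a) • finslerBall K (x i))
  have hV : ∀ i, IsCompact (V i) := fun i => shiftF_compact hK (hx i) _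
  set c : Fin m → ℝ := fun i => Real.exp 2 ^ d * fden K (x i)
  have hc : ∀ i, 0 ≤ c i := fun i => mul_nonneg (by positivity) (fden_nonneg _)
  set g : Euc d → ℝ := fun y => ∑ i, (V i).indicator (fun _ => c i) y
  have hgi : ∀ i, Integrable ((V i).indicator (fun _ => c i)) volume := fun i =>
    (integrable_indicator_iff (hV i).measurableSet).2 (integrableOn_const (hV i).measure_lt_top.ne)
  have hg : Integrable g volume := integrable_finset_sum _ (fun i _ => hgi i)
  have hg0 : ∀ y, 0 ≤ g y := fun y => Finset.sum_nonneg (fun i _ => indicator_nonneg (fun _ _ => hc i) y)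
  calc ∫ y in G, fden K y ≤ ∫ y in G, g y := by
        refine integral_mono_of_nonneg (Filter.Eventually.of_forall fun y => fden_nonneg y) hg.integrableOn ?_
        refine (ae_restrict_iff' hGm).2 (Filter.Eventually.of_forall ?_)
        intro y hy
        obtain ⟨i, hi⟩ := mem_iUnion.1 (hcov hy)
        have h1 := ball_subset hK (hx i) hi.1 ha ha1 hi.2
        have h2 := fden_ball hK (hx i) hi.1 hi.2
        calc fden K y ≤ c i := h2.trans (by
              have := fden_nonneg (K := K) (x i)
              simp only [c]
              gcongr
              linarith)
          _ = (V i).indicator (fun _ => c i) y := by rw [indicator_of_mem]; exact h1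
          _ ≤ _ := Finset.single_le_sum (f := fun i => (V i).indicator (fun _ => c i) y)
              (fun i _ => indicator_nonneg (fun _ _ => hc i) y) (Finset.mem_univ i)
    _ ≤ ∫ y, g y := setIntegral_le_integral hg (Filter.Eventually.of_forall hg0)
    _ = ∑ i, volume.real (V i) * c i := by
        rw [integral_finset_sum _ (fun i _ => hgi i)]
        refine Finset.sum_congr rfl fun i _ => ?_
        rw [integral_indicator (hV i).measurableSet, setIntegral_const, smul_eq_mul]
    _ ≤ ∑ i : Fin m, (96 * Real.exp 6 * a) ^ d * ωd d ^ 2 := by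
        refine Finset.sum_le_sum fun i _ => ?_
        have h3 := santalo_F hd hK (hx i)
        simp only [V, c]
        rw [vol_shift _ (by positivity)]
        calc (10 * a) ^ d * volume.real (finslerBall K (x i)) * (Real.exp 2 ^ d * fden K (x i))
            = (10 * a) ^ d * Real.exp 2 ^ d * (volume.real (finslerBall K (x i)) * fden K (x i)) := by ring
          _ ≤ (10 * a) ^ d * Real.exp 2 ^ d * ((8 * Real.exp 4) ^ d * ωd d ^ 2) := by gcongr
          _ = (80 * Real.exp 6 * a) ^ d * ωd d ^ 2 := by
              rw [show (6:ℝ) = 2 + 4 by norm_num, Real.exp_add, ← mul_assoc, ← mul_pow, ← mul_pow]; ring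
          _ ≤ _ := by gcongr; norm_num
    _ = _ := by simp

theorem expand_subset (hK : IsConvexBody K) {G : Set (Euc d)} (hG : IsConvexBody G) (hGK : G ⊆ interior K)
    {a : ℝ} (ha1 : a ≤ 1) : ∃ M, hilbertExpand K G a ⊆ {y | y ∈ interior K ∧ fden K y < M} := by
  obtain ⟨g0, hg0⟩ : G.Nonempty := hG.2.2.mono interior_subset
  have hcont := hp_continuous hK (hGK hg0)
  obtain ⟨g1, hg1, hmax⟩ := hG.1.exists_isMaxOn ⟨g0, hg0⟩
    (f := fun g => hp K g0 (g - g0)) (Continuous.continuousOn (by fun_prop))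
  have hlt := hp_lt_one hK (hGK hg0) (hGK hg1)
  set B := ((1 - hp K g0 (g1 - g0))⁻¹) ^ d * fden K g0
  have hB : ∀ g ∈ G, fden K g ≤ B := fun g hg =>
    fden_change hK (hGK hg0) (hGK hg) (by linarith) (by have := hmax hg; simp only [mem_setOf_eq] at this; linarith)
  refine ⟨Real.exp (2 * 2) ^ d * B + 1, ?_⟩
  rintro y ⟨hy, hd⟩
  refine ⟨hy, ?_⟩
  obtain ⟨_, ⟨g, hg, rfl⟩, h2⟩ := exists_lt_of_csInf_lt (Nonempty.image _ ⟨g0, hg0⟩) (hd.trans_lt (by linarith : a < 2))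
  rw [hilbertDist_comm] at h2
  have h3 := fden_ball hK (hGK hg) hy h2.le
  have h4 : Real.exp (2 * 2) ^ d * fden K g ≤ Real.exp (2 * 2) ^ d * B := by gcongr; exact hB g hg
  linarith

/-- Separated finite sets. -/
def sep (K G : Set (Euc d)) (a : ℝ) (T : Finset (Euc d)) : Prop :=
  (∀ t ∈ T, t ∈ G) ∧ ∀ s ∈ T, ∀ t ∈ T, s ≠ t → a < hilbertDist K s t

theorem sep_bound (hd : 0 < d) (hK : IsConvexBody K) {G : Set (Euc d)} (hG : IsConvexBody G) (hGK : G ⊆ interior K)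
    {a : ℝ} (ha : 0 < a) (ha1 : a ≤ 1) {T : Finset (Euc d)} (hT : sep K G a T) :
    T.card * (ωd d ^ 2 * a ^ d) ≤ (96 * Real.exp 6) ^ d * ∫ y in hilbertExpand K G a, fden K y := by
  set U : Euc d → Set (Euc d) := fun t => (fun y => y - t) ⁻¹' ((a / 8) • finslerBall K t)
  obtain ⟨M, hM⟩ := expand_subset hK hG hGK ha1
  have hIntg : IntegrableOn (fden K) (hilbertExpand K G a) volume := (fden_integrableOn hK M).mono_set hM
  have hU : ∀ t ∈ T, IsCompact (U t) := fun t ht => shiftF_compact hK (hGK (hT.1 t ht)) _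
  have hprop : ∀ t ∈ T, ∀ y ∈ U t, y ∈ interior K ∧ hp K y (t - y) ≤ 1 - 2/3 ∧ hilbertDist K t y ≤ a / 2 := by
    intro t ht y hy
    have := small_finsler hK (hGK (hT.1 t ht)) ha ha1 (v := y - t) hy
    rwa [add_sub_cancel] at this
  have hUs : ∀ t ∈ T, U t ⊆ hilbertExpand K G a := by
    intro t ht y hy
    obtain ⟨h1, h2, h3⟩ := hprop t ht y hy
    refine ⟨h1, ?_⟩
    have hbb : BddBelow (hilbertDist K y '' G) := by
      refine ⟨0, ?_⟩
      rintro _ ⟨g, hg, rfl⟩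
      exact hilbertDist_nonneg hK h1 (hGK hg)
    refine (csInf_le hbb ⟨t, hT.1 t ht, rfl⟩).trans ?_
    rw [hilbertDist_comm]; linarith
  have hdis : (T : Set (Euc d)).Pairwise (Function.onFun Disjoint U) := by
    intro s hs t ht hst
    rw [Function.onFun, Set.disjoint_left]
    intro y hy hy'
    have h1 := hprop s hs y hy
    have h2 := hprop t ht y hy'
    have h3 := hilbertDist_triangle hK (hGK (hT.1 s hs)) h1.1 (hGK (hT.1 t ht))
    rw [hilbertDist_comm y t] at h3
    have := hT.2 s hs t ht hst
    linarith [h1.2.2, h2.2.2]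
  have hsub : (⋃ t ∈ T, U t) ⊆ hilbertExpand K G a := iUnion₂_subset hUs
  have h1 : ∑ t ∈ T, ∫ y in U t, fden K y ≤ ∫ y in hilbertExpand K G a, fden K y := by
    rw [← integral_biUnion_finset T (fun t ht => (hU t ht).measurableSet) hdis (fun t ht => hIntg.mono_set (hUs t ht))]
    exact setIntegral_mono_set hIntg (Filter.Eventually.of_forall fun y => fden_nonneg y) (Filter.Eventually.of_forall hsub)
  have h2 : ∀ t ∈ T, ωd d ^ 2 * a ^ d ≤ (96 * Real.exp 6) ^ d * ∫ y in U t, fden K y := by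
    intro t ht
    have htK := hGK (hT.1 t ht)
    have hb := bm_F hd hK htK
    have hl : (2/3:ℝ) ^ d * fden K t * volume.real (U t) ≤ ∫ y in U t, fden K y := by
      refine setIntegral_ge_of_const_le_real (hU t ht).measurableSet (hU t ht).measure_lt_top.ne ?_ (hIntg.mono_set (hUs t ht))
      intro y hy
      obtain ⟨h1, h2, h3⟩ := hprop t ht y hy
      have h4 := fden_change hK h1 htK (by norm_num) h2
      calc (2/3:ℝ) ^ d * fden K t ≤ (2/3:ℝ) ^ d * (((2/3:ℝ)⁻¹) ^ d * fden K y) := by gcongr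
        _ = fden K y := by rw [← mul_assoc, ← mul_pow]; norm_num
    have hn : 0 ≤ volume.real (finslerBall K t) * fden K t := mul_nonneg measureReal_nonneg (fden_nonneg t)
    calc ωd d ^ 2 * a ^ d ≤ (8 * Real.exp 3) ^ d * (volume.real (finslerBall K t) * fden K t) * a ^ d := by gcongr
      _ = (96 * Real.exp 3) ^ d * ((2/3:ℝ) ^ d * fden K t * ((a / 8) ^ d * volume.real (finslerBall K t))) := by
          have : (8 * Real.exp 3) ^ d * a ^ d = (96 * Real.exp 3) ^ d * (2/3:ℝ) ^ d * (a / 8) ^ d := by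
            rw [← mul_pow, ← mul_pow, ← mul_pow]; congr 1; ring
          linear_combination (volume.real (finslerBall K t) * fden K t) * this
      _ ≤ (96 * Real.exp 6) ^ d * ((2/3:ℝ) ^ d * fden K t * ((a / 8) ^ d * volume.real (finslerBall K t))) := by
          have := fden_nonneg (K := K) t
          gcongr
          norm_num
      _ ≤ _ := by
          rw [← vol_shift t (by positivity)]
          gcongr
  calc T.card * (ωd d ^ 2 * a ^ d) = ∑ t ∈ T, ωd d ^ 2 * a ^ d := by simp
    _ ≤ ∑ t ∈ T, (96 * Real.exp 6) ^ d * ∫ y in U t, fden K y := Finset.sum_le_sum h2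
    _ ≤ _ := by rw [← Finset.mul_sum]; gcongr

theorem exists_cover (hd : 0 < d) (hK : IsConvexBody K) {G : Set (Euc d)} (hG : IsConvexBody G) (hGK : G ⊆ interior K)
    {a : ℝ} (ha : 0 < a) (ha1 : a ≤ 1) : ∃ T : Finset (Euc d), sep K G a T ∧
      ∃ x : Fin T.card → Euc d, (∀ i, x i ∈ interior K) ∧ G ⊆ ⋃ i, hilbertBall K (x i) a := by
  classical
  set S : Set ℕ := {n | ∃ T : Finset (Euc d), sep K G a T ∧ T.card = n}
  have hω := ωd_pos d
  have hpos : 0 < ωd d ^ 2 * a ^ d := by positivity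
  have hbd : BddAbove S := by
    refine ⟨⌊(96 * Real.exp 6) ^ d * (∫ y in hilbertExpand K G a, fden K y) / (ωd d ^ 2 * a ^ d)⌋₊, ?_⟩
    rintro _ ⟨T, hT, rfl⟩
    apply Nat.le_floor
    rw [le_div_iff₀ hpos]
    exact sep_bound hd hK hG hGK ha ha1 hT
  have hne : S.Nonempty := ⟨0, ∅, by simp [sep], rfl⟩
  obtain ⟨T, hT, hcard⟩ := Nat.sSup_mem hne hbd
  refine ⟨T, hT, fun i => (T.equivFin.symm i : Euc d), fun i => hGK (hT.1 _ (T.equivFin.symm i).2), ?_⟩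
  intro g hg
  suffices h : ∃ t ∈ T, hilbertDist K t g ≤ a by
    obtain ⟨t, ht, h⟩ := h
    refine mem_iUnion.2 ⟨T.equivFin ⟨t, ht⟩, hGK hg, ?_⟩
    simpa using h
  by_contra! hcon
  have hgT : g ∉ T := by
    intro h
    have := hcon g h
    rw [hilbertDist_eq] at this
    simp [hp_zero] at this
    linarith
  have hins : sep K G a (insert g T) := by
    refine ⟨?_, ?_⟩
    · intro t ht
      rcases Finset.mem_insert.1 ht with rfl | h
      · exact hg
      · exact hT.1 t h
    · intro s hs t ht hst
      rcases Finset.mem_insert.1 hs with rfl | h <;> rcases Finset.mem_insert.1 ht with rfl | h'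
      · exact absurd rfl hst
      · rw [hilbertDist_comm]; exact hcon t h'
      · exact hcon s h
      · exact hT.2 s h t h' hst
  have := le_csSup hbd (show (insert g T).card ∈ S from ⟨_, hins, rfl⟩)
  rw [Finset.card_insert_of_notMem hgT, ← hcard] at this
  omega
end
/-- Hilbert covering numbers vs Holmes–Thompson volume. -/
theorem hilbert_cover_volume_bounds :
    ∃ c : ℝ, 1 ≤ c ∧ ∀ d : ℕ, 2 ≤ d →
      ∀ G K : Set (Euc d), IsConvexBody G → IsConvexBody K → G ⊆ interior K →
        ∀ α : ℝ, 0 < α → α ≤ 1 →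
          (c ^ d)⁻¹ * (volH K G / (ωd d * α ^ d)) ≤ (hilbertCov K G α : ℝ) ∧
          (hilbertCov K G α : ℝ) ≤
            c ^ d * (volH K (hilbertExpand K G α) / (ωd d * α ^ d)) := by
  refine ⟨96 * Real.exp 6, ?_, ?_⟩
  · have := Real.add_one_le_exp (6:ℝ); linarith
  intro d hd G K hG hK hGK a ha ha1
  have hd0 : 0 < d := by omega
  have hω := ωd_pos d
  obtain ⟨T, hT, hcov⟩ := exists_cover hd0 hK hG hGK ha ha1
  have hne : {m : ℕ | ∃ x : Fin m → Euc d, (∀ i, x i ∈ interior K) ∧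
    G ⊆ ⋃ i, hilbertBall K (x i) a}.Nonempty := ⟨_, hcov⟩
  constructor
  · obtain ⟨x, hx, hc⟩ := Nat.sInf_mem hne
    have h1 := lower_bound hd0 hK hG.1.measurableSet ha ha1 x hx hc
    change _ * ((1 / ωd d * ∫ y in G, fden K y) / _) ≤ ((sInf _ : ℕ) : ℝ)
    rw [inv_mul_le_iff₀ (by positivity), div_le_iff₀ (by positivity), one_div, inv_mul_le_iff₀ hω]
    refine h1.trans (le_of_eq ?_)
    rw [mul_pow _ a]; ring
  · have h1 := sep_bound hd0 hK hG hGK ha ha1 hT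
    have h2 : (hilbertCov K G a : ℝ) ≤ T.card := by exact_mod_cast Nat.sInf_le hcov
    refine h2.trans ?_
    change _ ≤ _ * ((1 / ωd d * ∫ y in _, fden K y) / _)
    have e : (96 * Real.exp 6) ^ d * ((1 / ωd d * ∫ y in hilbertExpand K G a, fden K y) / (ωd d * a ^ d))
      = ((96 * Real.exp 6) ^ d * ∫ y in hilbertExpand K G a, fden K y) / (ωd d ^ 2 * a ^ d) := by
      field_simp
    rw [e, le_div_iff₀ (by positivity)]
    exact h1
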